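/- Let R be a commutative noetherian local ring of depth t and with residue field k. Then there is a filtration add R = PD_0^0(R) ⊊ PD_0^1(R) ⊊ ⋯ ⊊ PD_0^t(R) = PD_0(R) of resolving subcategories of mod R, and these t+1 subcategories are precisely all the resolving subcategories of mod R contained in PD_0(R). Moreover, when t > 0, for each integer 1 ≤ n ≤ t one has PD_0^n(R) = res(Tr Ω^{n-1} k) = ext(R ⊕ ⊕_{i=0}^{n-1} Tr Ω^i k). -/

import Mathlib

universe u

open CategoryTheory

namespace ResolvPaper

variable (R : Type u) [CommRing R]

/-- `IsSES f g` means `0 → A → B → C → 0` is a short exact sequence. -/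
def IsSES {R : Type u} [CommRing R] {A B C : Type u} [AddCommGroup A] [Module R A]
    [AddCommGroup B] [Module R B] [AddCommGroup C] [Module R C]
    (f : A →ₗ[R] B) (g : B →ₗ[R] C) : Prop :=
  Function.Injective f ∧ Function.Surjective g ∧ LinearMap.range f = LinearMap.ker g

/-- A resolving subcategory of `mod R`, viewed as a set of bundled modules
closed under isomorphism, containing the finitely generated projective modules, and closed
under direct summands, extensions and syzygies. -/
structure IsResolving (𝒳 : Set (ModuleCat.{u} R)) : Prop where
  fg : ∀ M ∈ 𝒳, Module.Finite R M
  iso_closed : ∀ M N : ModuleCat.{u} R, Nonempty (M ≃ₗ[R] N) → M ∈ 𝒳 → N ∈ 𝒳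
  proj_mem : ∀ M : ModuleCat.{u} R, Module.Finite R M → Module.Projective R M → M ∈ 𝒳
  summand_closed : ∀ M N : ModuleCat.{u} R, ModuleCat.of R (↥M × ↥N) ∈ 𝒳 → M ∈ 𝒳
  ext_closed : ∀ (A B C : ModuleCat.{u} R) (f : A →ₗ[R] B) (g : B →ₗ[R] C),
    IsSES f g → A ∈ 𝒳 → C ∈ 𝒳 → B ∈ 𝒳
  syzygy_closed : ∀ (K P M : ModuleCat.{u} R) (f : K →ₗ[R] P) (g : P →ₗ[R] M),
    IsSES f g → Module.Finite R K → Module.Finite R P → Module.Projective R P →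
    M ∈ 𝒳 → K ∈ 𝒳

/-- The resolving closure: the smallest resolving subcategory containing `S`. -/
def resClosure (S : Set (ModuleCat.{u} R)) : Set (ModuleCat.{u} R) :=
  ⋂₀ {𝒳 | IsResolving R 𝒳 ∧ S ⊆ 𝒳}

/-- An extension-closed subcategory of `mod R`: closed under isomorphism,
direct summands and extensions. -/
def IsExtClosed (𝒳 : Set (ModuleCat.{u} R)) : Prop :=
  (∀ M N : ModuleCat.{u} R, Nonempty (M ≃ₗ[R] N) → M ∈ 𝒳 → N ∈ 𝒳) ∧
  (∀ M N : ModuleCat.{u} R, ModuleCat.of R (↥M × ↥N) ∈ 𝒳 → M ∈ 𝒳) ∧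
  (∀ (A B C : ModuleCat.{u} R) (f : A →ₗ[R] B) (g : B →ₗ[R] C),
    IsSES f g → A ∈ 𝒳 → C ∈ 𝒳 → B ∈ 𝒳)

/-- The extension closure of a set of modules. -/
def extClosure (S : Set (ModuleCat.{u} R)) : Set (ModuleCat.{u} R) :=
  ⋂₀ {𝒳 | IsExtClosed R 𝒳 ∧ S ⊆ 𝒳}

/-- `add R`: direct summands of finite free modules. -/
def addR : Set (ModuleCat.{u} R) :=
  {M | ∃ (n : ℕ) (N : ModuleCat.{u} R), Nonempty ((↥M × ↥N) ≃ₗ[R] (Fin n → R))}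

/-- `pdLE n M` : the projective dimension of `M` is at most `n`. -/
def pdLE : ℕ → ModuleCat.{u} R → Prop
  | 0, M => Module.Projective R M
  | n+1, M => ∃ (K P : ModuleCat.{u} R) (f : K →ₗ[R] P) (g : P →ₗ[R] M),
      Module.Finite R P ∧ Module.Projective R P ∧ IsSES f g ∧ pdLE n K

/-- The projective dimension, an element of `WithBot ℕ∞`; the zero module
has projective dimension `⊥ = -∞`. -/
noncomputable def pdim (M : ModuleCat.{u} R) : WithBot ℕ∞ :=
  sInf {x : WithBot ℕ∞ | (x = ⊥ ∧ Subsingleton M) ∨ ∃ n : ℕ, x = (n : ℕ∞) ∧ pdLE R n M}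

/-- The depth of `M` with respect to the ideal `I`: the supremum of lengths of weakly
`M`-regular sequences contained in `I`.  The zero module has depth `∞`. -/
noncomputable def depthE (I : Ideal R) (M : Type u) [AddCommGroup M] [Module R M] : ℕ∞ :=
  sSup {x : ℕ∞ | ∃ rs : List R, (∀ r ∈ rs, r ∈ I) ∧
    RingTheory.Sequence.IsWeaklyRegular M rs ∧ x = rs.length}

/-- The grade of an ideal: the length of a maximal `R`-regular sequence in `I`. -/
noncomputable def gradeE (I : Ideal R) : ℕ∞ := depthE R I R

/-- A grade consistent function on `Spec R`. -/
def GradeConsistent (f : PrimeSpectrum R → ℕ) : Prop :=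
  (∀ p : PrimeSpectrum R, (f p : ℕ∞) ≤ gradeE R p.asIdeal) ∧
  (∀ p q : PrimeSpectrum R, p.asIdeal ≤ q.asIdeal → f p ≤ f q)

/-- The localization of a module at a prime, as a module over the local ring `R_p`. -/
noncomputable abbrev localizeM (p : PrimeSpectrum R) (M : ModuleCat.{u} R) :
    ModuleCat.{u} (Localization.AtPrime p.asIdeal) :=
  ModuleCat.of (Localization.AtPrime p.asIdeal) (LocalizedModule p.asIdeal.primeCompl M)

/-- `pd_{R_p} M_p`. -/
noncomputable def localPdim (p : PrimeSpectrum R) (M : ModuleCat.{u} R) : WithBot ℕ∞ :=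
  pdim (Localization.AtPrime p.asIdeal) (localizeM R p M)

/-- `depth_{R_p} M_p`. -/
noncomputable def localDepth (p : PrimeSpectrum R) (M : ModuleCat.{u} R) : ℕ∞ :=
  depthE (Localization.AtPrime p.asIdeal)
    (IsLocalRing.maximalIdeal (Localization.AtPrime p.asIdeal))
    (LocalizedModule p.asIdeal.primeCompl M)

/-- The height of a prime ideal. -/
noncomputable def heightE (p : PrimeSpectrum R) : ℕ∞ := Order.height p

/-- `PD(R)` : finitely generated modules of finite projective dimension. -/
def PDcat : Set (ModuleCat.{u} R) :=
  {M | Module.Finite R M ∧ ∃ n : ℕ, pdLE R n M}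

/-- `MCM(R)` : maximal Cohen-Macaulay modules. -/
def MCMcat : Set (ModuleCat.{u} R) :=
  {M | Module.Finite R M ∧ ∀ p : PrimeSpectrum R, heightE R p ≤ localDepth R p M}

/-- The nonfree locus of a module. -/
def NF (M : ModuleCat.{u} R) : Set (PrimeSpectrum R) :=
  {p | ¬ Module.Free (Localization.AtPrime p.asIdeal) (LocalizedModule p.asIdeal.primeCompl M)}

/-- The infinite projective dimension locus of a module. -/
def IPD (M : ModuleCat.{u} R) : Set (PrimeSpectrum R) :=
  {p | localPdim R p M = (⊤ : WithBot ℕ∞)}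

/-- The infinite projective dimension locus of a collection of modules. -/
def IPDcat (𝒳 : Set (ModuleCat.{u} R)) : Set (PrimeSpectrum R) :=
  ⋃ M ∈ 𝒳, IPD R M

/-- The modules in `mod R` whose infinite projective dimension locus lies in `W`. -/
def IPDinv (W : Set (PrimeSpectrum R)) : Set (ModuleCat.{u} R) :=
  {M | Module.Finite R M ∧ IPD R M ⊆ W}

/-- A specialization closed subset of `Spec R`. -/
def SpecClosed (W : Set (PrimeSpectrum R)) : Prop :=
  ∀ p ∈ W, ∀ q : PrimeSpectrum R, p.asIdeal ≤ q.asIdeal → q ∈ W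

/-- Membership in `add 𝒳_p`: direct summands of localizations of finite direct sums
of members of `𝒳`. -/
def memAddLocal (𝒳 : Set (ModuleCat.{u} R)) (p : PrimeSpectrum R)
    (N : ModuleCat.{u} (Localization.AtPrime p.asIdeal)) : Prop :=
  ∃ (n : ℕ) (X : Fin n → ModuleCat.{u} R), (∀ i, X i ∈ 𝒳) ∧
    ∃ (N' : ModuleCat.{u} (Localization.AtPrime p.asIdeal)),
      Nonempty ((↥N × ↥N') ≃ₗ[Localization.AtPrime p.asIdeal]
        ((i : Fin n) → LocalizedModule p.asIdeal.primeCompl (X i)))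

/-- `K` is an `n`-th syzygy of `M` computed from a minimal free resolution over the
local ring `S`. -/
def IsMinSyz (S : Type u) [CommRing S] [IsLocalRing S] :
    ℕ → ModuleCat.{u} S → ModuleCat.{u} S → Prop
  | 0, M, K => Nonempty (K ≃ₗ[S] M)
  | n+1, M, K => ∃ (F : ModuleCat.{u} S) (g : F →ₗ[S] M) (K' : ModuleCat.{u} S)
      (i : K' →ₗ[S] F),
      Module.Finite S F ∧ Module.Free S F ∧ Function.Surjective g ∧
      (LinearMap.ker g ≤ (IsLocalRing.maximalIdeal S) • (⊤ : Submodule S F)) ∧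
      Function.Injective i ∧ LinearMap.range i = LinearMap.ker g ∧
      IsMinSyz S n K' K

/-- `K` is an `n`-th syzygy of `M` in some projective resolution (over any ring). -/
def IsSyz : ℕ → ModuleCat.{u} R → ModuleCat.{u} R → Prop
  | 0, M, K => Nonempty (K ≃ₗ[R] M)
  | n+1, M, K => ∃ (F : ModuleCat.{u} R) (g : F →ₗ[R] M) (K' : ModuleCat.{u} R)
      (i : K' →ₗ[R] F),
      Module.Finite R F ∧ Module.Projective R F ∧ Function.Surjective g ∧
      Function.Injective i ∧ LinearMap.range i = LinearMap.ker g ∧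
      IsSyz n K' K

/-- `T` is (isomorphic to) the Auslander transpose of `M`, computed from a minimal
free presentation over the local ring `S`. -/
def IsTranspose (S : Type u) [CommRing S] [IsLocalRing S] (M T : ModuleCat.{u} S) : Prop :=
  ∃ (F1 F0 : ModuleCat.{u} S) (d : F1 →ₗ[S] F0) (e : F0 →ₗ[S] M),
    Module.Finite S F0 ∧ Module.Free S F0 ∧ Module.Finite S F1 ∧ Module.Free S F1 ∧
    Function.Surjective e ∧ LinearMap.range d = LinearMap.ker e ∧
    LinearMap.ker e ≤ (IsLocalRing.maximalIdeal S) • (⊤ : Submodule S F0) ∧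
    LinearMap.ker d ≤ (IsLocalRing.maximalIdeal S) • (⊤ : Submodule S F1) ∧
    Nonempty (T ≃ₗ[S] ((Module.Dual S F1) ⧸ LinearMap.range d.dualMap))

/-- `T` is (isomorphic to) `Tr Ω^n M` over the local ring `S`. -/
def IsTrOmega (S : Type u) [CommRing S] [IsLocalRing S] (n : ℕ) (M T : ModuleCat.{u} S) :
    Prop :=
  ∃ K : ModuleCat.{u} S, IsMinSyz S n M K ∧ IsTranspose S K T

/-- Resolving subcategory `𝒳` is dominant on `W ⊆ Spec R`. -/
def DominantOn (𝒳 : Set (ModuleCat.{u} R)) (W : Set (PrimeSpectrum R)) : Prop :=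
  ∀ p ∈ W, ∃ (n : ℕ) (K : ModuleCat.{u} (Localization.AtPrime p.asIdeal)),
    IsMinSyz (Localization.AtPrime p.asIdeal) n
      (ModuleCat.of (Localization.AtPrime p.asIdeal)
        (IsLocalRing.ResidueField (Localization.AtPrime p.asIdeal))) K ∧
    memAddLocal R 𝒳 p K

/-- Dominant resolving subcategory. -/
def Dominant (𝒳 : Set (ModuleCat.{u} R)) : Prop := DominantOn R 𝒳 Set.univ

/-- A (noetherian) local ring is Cohen-Macaulay if its depth equals its Krull dimension. -/
def IsCMLocalRing (S : Type u) [CommRing S] [IsLocalRing S] : Prop :=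
  IsNoetherianRing S ∧
    ((depthE S (IsLocalRing.maximalIdeal S) S : WithBot ℕ∞) = ringKrullDim S)

/-- A regular local ring: a noetherian local ring whose maximal ideal is generated by
`dim S` elements. -/
def IsRegLocalRing (S : Type u) [CommRing S] [IsLocalRing S] : Prop :=
  IsNoetherianRing S ∧ ∃ s : Finset S,
    Ideal.span (s : Set S) = IsLocalRing.maximalIdeal S ∧
    ringKrullDim S = (s.card : WithBot ℕ∞)

/-- The singular locus of `R`. -/
def SingLocus : Set (PrimeSpectrum R) :=
  {p | ¬ IsRegLocalRing (Localization.AtPrime p.asIdeal)}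

/-- A hypersurface local ring: the completion is a quotient of a regular local ring by
one element. -/
def IsHypersurfaceLocalRing (S : Type u) [CommRing S] [IsLocalRing S] : Prop :=
  ∃ (T : Type u) (_ : CommRing T) (_ : IsLocalRing T) (f : T),
    IsRegLocalRing T ∧
    Nonempty ((AdicCompletion (IsLocalRing.maximalIdeal S) S) ≃+* (T ⧸ Ideal.span {f}))

/-- A complete intersection local ring: the completion is a quotient of a regular local
ring by a regular sequence. -/
def IsCompleteIntersectionLocalRing (S : Type u) [CommRing S] [IsLocalRing S] : Prop :=
  ∃ (T : Type u) (_ : CommRing T) (_ : IsLocalRing T) (rs : List T),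
    IsRegLocalRing T ∧ RingTheory.Sequence.IsRegular T rs ∧
    Nonempty ((AdicCompletion (IsLocalRing.maximalIdeal S) S) ≃+*
      (T ⧸ Ideal.ofList rs))

/-- The subquotient `A / (A ⊓ B)` of two submodules, used for homology. -/
def subquot {S M : Type u} [CommRing S] [AddCommGroup M] [Module S M]
    (A B : Submodule S M) : Type u :=
  A ⧸ (B.comap A.subtype)

noncomputable instance {S M : Type u} [CommRing S] [AddCommGroup M] [Module S M]
    (A B : Submodule S M) : AddCommGroup (subquot A B) :=
  inferInstanceAs (AddCommGroup (A ⧸ (B.comap A.subtype)))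

noncomputable instance {S M : Type u} [CommRing S] [AddCommGroup M] [Module S M]
    (A B : Submodule S M) : Module S (subquot A B) :=
  inferInstanceAs (Module S (A ⧸ (B.comap A.subtype)))

/-- `E` is (isomorphic to) `Ext^{j+1}_S(M, S)`, computed from a finite free resolution. -/
def IsExtPos (S : Type u) [CommRing S] (j : ℕ) (M E : ModuleCat.{u} S) : Prop :=
  ∃ (F : ℕ → ModuleCat.{u} S) (d : ∀ i : ℕ, (F (i+1) : Type u) →ₗ[S] F i)
    (e : (F 0 : Type u) →ₗ[S] M),
    (∀ i, Module.Finite S (F i)) ∧ (∀ i, Module.Free S (F i)) ∧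
    Function.Surjective e ∧ LinearMap.range (d 0) = LinearMap.ker e ∧
    (∀ i, LinearMap.range (d (i+1)) = LinearMap.ker (d i)) ∧
    Nonempty (E ≃ₗ[S]
      subquot (LinearMap.ker ((d (j+1)).dualMap)) (LinearMap.range ((d j).dualMap)))

/-- `T` is (isomorphic to) `Tor_n^S(M, N)`, computed from a projective resolution of `M`. -/
def IsTor (S : Type u) [CommRing S] (n : ℕ) (M N T : ModuleCat.{u} S) : Prop :=
  ∃ (F : ℕ → ModuleCat.{u} S) (d : ∀ i : ℕ, (F (i+1) : Type u) →ₗ[S] F i)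
    (e : (F 0 : Type u) →ₗ[S] M),
    (∀ i, Module.Projective S (F i)) ∧
    Function.Surjective e ∧ LinearMap.range (d 0) = LinearMap.ker e ∧
    (∀ i, LinearMap.range (d (i+1)) = LinearMap.ker (d i)) ∧
    (match n with
      | 0 => Nonempty (T ≃ₗ[S] TensorProduct S M N)
      | (j+1) => Nonempty (T ≃ₗ[S]
          subquot (LinearMap.ker (LinearMap.rTensor (↥N) (d j)))
            (LinearMap.range (LinearMap.rTensor (↥N) (d (j+1))))))

/-- `idLE n M` : the injective dimension of `M` is at most `n`. -/
def idLE (S : Type u) [CommRing S] : ℕ → ModuleCat.{u} S → Prop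
  | 0, M => Module.Injective S M
  | n+1, M => ∃ (I C : ModuleCat.{u} S) (f : M →ₗ[S] I) (g : I →ₗ[S] C),
      IsSES f g ∧ Module.Injective S I ∧ idLE S n C

/-- `PD_0^n(R)` over a local ring: modules of projective dimension at most `n` that are
free on the punctured spectrum. -/
def PD0n [IsLocalRing R] (n : ℕ) : Set (ModuleCat.{u} R) :=
  {M | Module.Finite R M ∧ pdLE R n M ∧
    ∀ p : PrimeSpectrum R, p.asIdeal ≠ IsLocalRing.maximalIdeal R →
      Module.Free (Localization.AtPrime p.asIdeal) (LocalizedModule p.asIdeal.primeCompl M)}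

/-- `PD_0(R)` over a local ring: modules of finite projective dimension that are
free on the punctured spectrum. -/
def PD0 [IsLocalRing R] : Set (ModuleCat.{u} R) :=
  {M | Module.Finite R M ∧ (∃ n : ℕ, pdLE R n M) ∧
    ∀ p : PrimeSpectrum R, p.asIdeal ≠ IsLocalRing.maximalIdeal R →
      Module.Free (Localization.AtPrime p.asIdeal) (LocalizedModule p.asIdeal.primeCompl M)}

/-- The residue field of a local ring, as a bundled module. -/
noncomputable abbrev residueMod (S : Type u) [CommRing S] [IsLocalRing S] : ModuleCat.{u} S :=
  ModuleCat.of S (IsLocalRing.ResidueField S)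

/- A module `N` in `PD_0^{n+1}` of projective dimension exactly `n + 1` receives a map from
`Tr Ω^n k` that is surjective on `Ext^{n+1}(-, R)`. Make the map surjective by adding a free module
to its source: the kernel lies in `PD_0^n`, so a resolving subcategory containing `PD_0^n` and `N`
contains `Tr Ω^n k`. Conversely, let `j` be least with `Ext^{j+1}(N, R) ≠ 0`. Since
`Ext^{j+1}(Tr Ω^j k, R)` is the residue field, every socle element of `Ext^{j+1}(N, R)` is the
pullback of a generator along a map `N → Tr Ω^j k`, whose stable kernel has a smaller
`Ext^{j+1}(-, R)`. Hence every module of `PD_0^{n+1}` is built by extensions from `R` and the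
`Tr Ω^i k`, `i ≤ n`. The depth `t` enters through `Ext^i(k, R) = 0` for `i < t`, which makes the
dual of the minimal resolution of `k` exact in that range, and through the Auslander–Buchsbaum
bound on projective dimensions. -/

section

open Abelian

variable {R}

namespace IsSES

section

variable {A B C : Type u} [AddCommGroup A] [Module R A] [AddCommGroup B] [Module R B]
  [AddCommGroup C] [Module R C] {f : A →ₗ[R] B} {g : B →ₗ[R] C}

theorem exact (h : IsSES f g) : Function.Exact f g :=
  LinearMap.exact_iff.2 h.2.2.symm

theorem of_exact (hf : Function.Injective f) (hg : Function.Surjective g)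
    (h : Function.Exact f g) : IsSES f g :=
  ⟨hf, hg, (LinearMap.exact_iff.1 h).symm⟩

theorem subtype_ker (hg : Function.Surjective g) : IsSES (LinearMap.ker g).subtype g :=
  ⟨Subtype.val_injective, hg, Submodule.range_subtype _⟩

theorem inl_snd (A C : Type u) [AddCommGroup A] [Module R A] [AddCommGroup C] [Module R C] :
    IsSES (LinearMap.inl R A C) (LinearMap.snd R A C) :=
  ⟨LinearMap.inl_injective, LinearMap.snd_surjective, LinearMap.range_inl R A C⟩

theorem exists_desc (h : IsSES f g) {D : Type u} [AddCommGroup D] [Module R D] (φ : B →ₗ[R] D)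
    (hφ : φ ∘ₗ f = 0) : ∃ ψ : C →ₗ[R] D, ψ ∘ₗ g = φ :=
  (LinearMap.exact_lcomp_of_exact_of_surjective D h.exact h.2.1 φ).1 hφ

end

variable {A B C : ModuleCat.{u} R} {f : A →ₗ[R] B} {g : B →ₗ[R] C}

theorem shortExact (h : IsSES f g) :
    (ShortComplex.mk (ModuleCat.ofHom f) (ModuleCat.ofHom g)
      (ModuleCat.hom_ext h.exact.linearMap_comp_eq_zero)).ShortExact := by
  refine .mk' ?_ ((ModuleCat.mono_iff_injective _).2 h.1) ((ModuleCat.epi_iff_surjective _).2 h.2.1)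
  exact (ShortComplex.moduleCat_exact_iff_range_eq_ker _).2 h.2.2

end IsSES

section Ext

variable {A B C N Y Z : ModuleCat.{u} R} {i : ℕ}

/-- The identification of `Hom(N, Y)` with `Ext^0(N, Y)`. -/
noncomputable def homExt : (N →ₗ[R] Y) ≃ₗ[R] Ext N Y 0 :=
  ModuleCat.homLinearEquiv.symm ≪≫ₗ Ext.linearEquiv₀.symm

/-- The map `Ext^i(f, Y) : Ext^i(B, Y) → Ext^i(A, Y)`, as a linear function of `f : A → B`. -/
noncomputable def extPullback : (A →ₗ[R] B) →ₗ[R] Ext B Y i →ₗ[R] Ext A Y i :=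
  Ext.bilinearCompOfLinear R A B Y 0 i i (zero_add i) ∘ₗ homExt.toLinearMap

/-- The map `Ext^i(N, f) : Ext^i(N, Y) → Ext^i(N, Z)`, as a linear function of `f : Y → Z`. -/
noncomputable def extPushforward : (Y →ₗ[R] Z) →ₗ[R] Ext N Y i →ₗ[R] Ext N Z i :=
  (Ext.bilinearCompOfLinear R N Y Z i 0 i (add_zero i)).flip ∘ₗ homExt.toLinearMap

theorem homExt_apply (f : N →ₗ[R] Y) : homExt f = Ext.mk₀ (ModuleCat.ofHom f) := rfl

theorem extPullback_apply (f : A →ₗ[R] B) (x : Ext B Y i) :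
    extPullback f x = (Ext.mk₀ (ModuleCat.ofHom f)).comp x (zero_add i) := rfl

theorem extPushforward_apply (f : Y →ₗ[R] Z) (x : Ext N Y i) :
    extPushforward f x = x.comp (Ext.mk₀ (ModuleCat.ofHom f)) (add_zero i) := rfl

theorem extPullback_comp (f : A →ₗ[R] B) (g : B →ₗ[R] C) (x : Ext C Y i) :
    extPullback (g ∘ₗ f) x = extPullback f (extPullback g x) := by
  simp [extPullback_apply, ModuleCat.ofHom_comp]

theorem extPullback_id (x : Ext A Y i) : extPullback LinearMap.id x = x :=
  Ext.mk₀_id_comp x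

theorem extPushforward_comp (f : Y →ₗ[R] Z) {W : ModuleCat.{u} R} (g : Z →ₗ[R] W) (x : Ext N Y i) :
    extPushforward (g ∘ₗ f) x = extPushforward g (extPushforward f x) := by
  simp [extPushforward_apply, ModuleCat.ofHom_comp]

theorem extPushforward_id (x : Ext A Y i) : extPushforward LinearMap.id x = x :=
  Ext.comp_mk₀_id x

theorem extPullback_homExt (f : A →ₗ[R] N) (g : N →ₗ[R] Y) :
    extPullback f (homExt g) = homExt (g ∘ₗ f) := by
  simp [extPullback_apply, homExt_apply, ModuleCat.ofHom_comp]

theorem extPushforward_homExt (f : N →ₗ[R] Y) (g : Y →ₗ[R] Z) :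
    extPushforward g (homExt f) = homExt (g ∘ₗ f) := by
  simp [extPushforward_apply, homExt_apply, ModuleCat.ofHom_comp]

theorem ext_eq_zero_of_projective [Module.Projective R A] (x : Ext A Y (i + 1)) : x = 0 :=
  have := (IsProjective.iff_projective A).1 ‹_›
  x.eq_zero_of_projective

namespace IsSES

variable {f : A →ₗ[R] B} {g : B →ₗ[R] C}

/-- The connecting map of the contravariant long exact `Ext` sequence. -/
noncomputable def contravariantδ (h : IsSES f g) : Ext A Y i →ₗ[R] Ext C Y (i + 1) :=
  h.shortExact.extClass.precompOfLinear R Y (add_comm 1 i)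

/-- The connecting map of the covariant long exact `Ext` sequence. -/
noncomputable def covariantδ (h : IsSES f g) : Ext N C i →ₗ[R] Ext N A (i + 1) :=
  h.shortExact.extClass.postcompOfLinear R N rfl

theorem exact_extPullback (h : IsSES f g) :
    Function.Exact (extPullback (Y := Y) (i := i) g) (extPullback f) := fun x =>
  ⟨Ext.contravariant_sequence_exact₂ h.shortExact Y x, by
    rintro ⟨z, rfl⟩
    rw [← extPullback_comp, h.exact.linearMap_comp_eq_zero, map_zero, LinearMap.zero_apply]⟩

theorem exact_extPullback_contravariantδ (h : IsSES f g) :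
    Function.Exact (extPullback (Y := Y) (i := i) f) h.contravariantδ := fun x =>
  ⟨Ext.contravariant_sequence_exact₁ h.shortExact Y x (add_comm 1 i), by
    rintro ⟨z, rfl⟩
    exact h.shortExact.extClass_comp_assoc z (h := add_comm 1 i)⟩

theorem exact_contravariantδ_extPullback (h : IsSES f g) :
    Function.Exact (h.contravariantδ (Y := Y) (i := i)) (extPullback g) := fun x =>
  ⟨fun hx => Ext.contravariant_sequence_exact₃ h.shortExact Y x hx (add_comm 1 i), by
    rintro ⟨z, rfl⟩
    exact h.shortExact.comp_extClass_assoc z (add_comm 1 i)⟩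

theorem exact_extPushforward_covariantδ (h : IsSES f g) :
    Function.Exact (extPushforward (N := N) (i := i) g) h.covariantδ := fun x =>
  ⟨Ext.covariant_sequence_exact₃ N h.shortExact x rfl, by
    rintro ⟨z, rfl⟩
    refine (Ext.comp_assoc_of_second_deg_zero _ _ _ rfl).trans ?_
    exact (congrArg (z.comp · rfl) h.shortExact.comp_extClass).trans (Ext.comp_zero ..)⟩

theorem exact_covariantδ_extPushforward (h : IsSES f g) :
    Function.Exact (h.covariantδ (N := N) (i := i)) (extPushforward f) := fun x =>
  ⟨fun hx => Ext.covariant_sequence_exact₁ N h.shortExact x hx rfl, by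
    rintro ⟨z, rfl⟩
    refine (Ext.comp_assoc_of_third_deg_zero _ _ _ rfl).trans ?_
    exact (congrArg (z.comp · rfl) h.shortExact.extClass_comp).trans (Ext.comp_zero ..)⟩

theorem extPullback_contravariantδ (h : IsSES f g) {A' B' C' : ModuleCat.{u} R}
    {f' : A' →ₗ[R] B'} {g' : B' →ₗ[R] C'} (h' : IsSES f' g') (a : A →ₗ[R] A') (b : B →ₗ[R] B')
    (c : C →ₗ[R] C') (hab : f' ∘ₗ a = b ∘ₗ f) (hbc : g' ∘ₗ b = c ∘ₗ g) (x : Ext A' Y i) :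
    extPullback c (h'.contravariantδ x) = h.contravariantδ (extPullback a x) := by
  have key := ShortComplex.ShortExact.extClass_naturality h.shortExact h'.shortExact
    { τ₁ := ModuleCat.ofHom a
      τ₂ := ModuleCat.ofHom b
      τ₃ := ModuleCat.ofHom c
      comm₁₂ := ModuleCat.hom_ext hab
      comm₂₃ := ModuleCat.hom_ext hbc }
  calc
    _ = ((Ext.mk₀ (ModuleCat.ofHom c)).comp h'.shortExact.extClass (zero_add 1)).comp x
          (add_comm 1 i) := (Ext.comp_assoc _ _ _ (zero_add 1) (add_comm 1 i) (by lia)).symm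
    _ = (h.shortExact.extClass.comp (Ext.mk₀ (ModuleCat.ofHom a)) (add_zero 1)).comp x
          (add_comm 1 i) := congrArg (Ext.comp · x (add_comm 1 i)) key.symm
    _ = _ := Ext.comp_assoc_of_second_deg_zero _ _ _ (add_comm 1 i)

end IsSES

end Ext

section ProjectiveDimension

variable {N N' Y : ModuleCat.{u} R} {i : ℕ}

theorem ext_eq_zero_of_functionals [Module.Finite R Y] [Module.Free R Y] (x : Ext N Y i)
    (hx : ∀ ψ : Y →ₗ[R] ModuleCat.of R R, extPushforward ψ x = 0) : x = 0 := by
  let b := Module.Free.chooseBasis R Y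
  have id_eq_sum : (LinearMap.id : Y →ₗ[R] Y) =
      ∑ j, (LinearMap.toSpanSingleton R Y (b j) : ModuleCat.of R R →ₗ[R] Y) ∘ₗ b.coord j := by
    ext y
    simp [b.sum_repr]
  rw [← extPushforward_id x, id_eq_sum, map_sum, LinearMap.sum_apply]
  exact Finset.sum_eq_zero fun j _ => by
    rw [extPushforward_comp (Z := ModuleCat.of R R), hx, map_zero]

theorem subsingleton_ext_of_free [Module.Finite R Y] [Module.Free R Y]
    [Subsingleton (Ext N (ModuleCat.of R R) i)] : Subsingleton (Ext N Y i) :=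
  subsingleton_of_forall_eq 0 fun x => ext_eq_zero_of_functionals x fun _ => Subsingleton.elim _ _

theorem hasProjectiveDimensionLT_of_projective [Module.Projective R N] (n : ℕ) :
    HasProjectiveDimensionLT N (n + 1) :=
  have := (IsProjective.iff_projective N).1 ‹_›
  hasProjectiveDimensionLT_of_ge N 1 (n + 1) (by lia)

theorem projective_of_hasProjectiveDimensionLT_one (hN : HasProjectiveDimensionLT N 1) :
    Module.Projective R N :=
  (IsProjective.iff_projective N).2 (projective_iff_hasProjectiveDimensionLT_one.2 hN)

theorem hasProjectiveDimensionLT_of_retract {n : ℕ} [HasProjectiveDimensionLT N n]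
    (a : N' →ₗ[R] N) (b : N →ₗ[R] N') (hab : b ∘ₗ a = LinearMap.id) :
    HasProjectiveDimensionLT N' n :=
  Retract.hasProjectiveDimensionLT
    { i := ModuleCat.ofHom a, r := ModuleCat.ofHom b, retract := ModuleCat.hom_ext hab } n

theorem exists_free_cover (M : ModuleCat.{u} R) [Module.Finite R M] :
    ∃ (K F : ModuleCat.{u} R) (f : K →ₗ[R] F) (g : F →ₗ[R] M),
      Module.Finite R F ∧ Module.Free R F ∧ IsSES f g := by
  obtain ⟨n, g, hg⟩ := Module.Finite.exists_fin' R M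
  exact ⟨ModuleCat.of R (LinearMap.ker g), ModuleCat.of R (Fin n → R), _, g,
    inferInstanceAs (Module.Finite R (Fin n → R)), inferInstanceAs (Module.Free R (Fin n → R)),
    .subtype_ker hg⟩

variable [IsNoetherianRing R]

theorem hasProjectiveDimensionLT_of_subsingleton_ext {M : ModuleCat.{u} R} [Module.Finite R M]
    {n : ℕ} [HasProjectiveDimensionLT M (n + 1)]
    [Subsingleton (Ext M (ModuleCat.of R R) n)] : HasProjectiveDimensionLT M n := by
  refine ModuleCat.hasProjectiveDimensionLT_of_forall_finite M n fun L _ =>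
    subsingleton_of_forall_eq 0 fun x => ?_
  obtain ⟨K, F, f, g, _, _, h⟩ := exists_free_cover L
  obtain ⟨z, rfl⟩ := (h.exact_extPushforward_covariantδ x).1
    (Ext.eq_zero_of_hasProjectiveDimensionLT _ (n + 1) le_rfl)
  rw [subsingleton_ext_of_free.elim z 0, map_zero]

theorem pdLE_iff_hasProjectiveDimensionLT {M : ModuleCat.{u} R} [Module.Finite R M] (n : ℕ) :
    pdLE R n M ↔ HasProjectiveDimensionLT M (n + 1) := by
  induction n generalizing M with
  | zero =>
    exact ⟨fun (_ : Module.Projective R M) => hasProjectiveDimensionLT_of_projective 0,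
      projective_of_hasProjectiveDimensionLT_one⟩
  | succ n ih =>
    constructor
    · rintro ⟨K, P, f, g, _, _, h, hK⟩
      have : Module.Finite R K := .of_injective f h.1
      exact h.shortExact.hasProjectiveDimensionLT_X₃ _ (ih.1 hK)
        (hasProjectiveDimensionLT_of_projective _)
    · intro hM
      obtain ⟨K, F, f, g, _, _, h⟩ := exists_free_cover M
      have : Module.Finite R K := .of_injective f h.1
      exact ⟨K, F, f, g, inferInstance, inferInstance, h, ih.2
        (h.shortExact.hasProjectiveDimensionLT_X₁ _ (hasProjectiveDimensionLT_of_projective _) hM)⟩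

end ProjectiveDimension

section ExtAnnihilator

variable {A B C M N F K : ModuleCat.{u} R} {s : R}

/-- The ideal of all elements annihilating `Ext^i(M, Y)` for every `i > 0` and every `Y`.
For `M` finitely generated over a noetherian ring it defines the nonfree locus of `M`. -/
noncomputable def extAnnihilator (M : ModuleCat.{u} R) : Ideal R :=
  ⨅ (i : ℕ) (Y : ModuleCat.{u} R), Module.annihilator R (Ext M Y (i + 1))

theorem mem_extAnnihilator :
    s ∈ extAnnihilator M ↔ ∀ (i : ℕ) (Y : ModuleCat.{u} R) (x : Ext M Y (i + 1)), s • x = 0 := by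
  simp only [extAnnihilator, Ideal.mem_iInf, Module.mem_annihilator]

theorem mem_extAnnihilator_of_factor [Module.Projective R F] (a : M →ₗ[R] F) (b : F →ₗ[R] M)
    (hab : b ∘ₗ a = s • LinearMap.id) : s ∈ extAnnihilator M :=
  mem_extAnnihilator.2 fun i Y x => calc
    s • x = extPullback (s • LinearMap.id) x := by
      rw [map_smul, LinearMap.smul_apply, extPullback_id]
    _ = extPullback a (extPullback b x) := by rw [← hab, extPullback_comp]
    _ = 0 := by rw [ext_eq_zero_of_projective (extPullback b x), map_zero]

theorem exists_lift_smul_id {f : K →ₗ[R] F} {g : F →ₗ[R] M} (h : IsSES f g)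
    (hs : s ∈ extAnnihilator M) : ∃ a : M →ₗ[R] F, g ∘ₗ a = s • LinearMap.id := by
  have hδ : h.covariantδ (homExt (s • LinearMap.id : M →ₗ[R] M)) = 0 := by
    rw [map_smul, map_smul, mem_extAnnihilator.1 hs]
  obtain ⟨z, hz⟩ := (h.exact_extPushforward_covariantδ _).1 hδ
  obtain ⟨a, rfl⟩ := homExt.surjective z
  exact ⟨a, homExt.injective ((extPushforward_homExt _ _).symm.trans hz)⟩

theorem extAnnihilator_le_of_retract (a : N →ₗ[R] M) (b : M →ₗ[R] N)
    (hab : b ∘ₗ a = LinearMap.id) : extAnnihilator M ≤ extAnnihilator N := fun s hs =>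
  mem_extAnnihilator.2 fun i Y x => by
    rw [← extPullback_id x, ← hab, extPullback_comp, ← map_smul, mem_extAnnihilator.1 hs, map_zero]

theorem extAnnihilator_eq_top_of_projective [Module.Projective R M] : extAnnihilator M = ⊤ :=
  (Ideal.eq_top_iff_one _).2 (mem_extAnnihilator_of_factor LinearMap.id LinearMap.id (by simp))

namespace IsSES

variable {f : A →ₗ[R] B} {g : B →ₗ[R] C}

theorem extAnnihilator_mul_le_middle (h : IsSES f g) :
    extAnnihilator A * extAnnihilator C ≤ extAnnihilator B :=
  Ideal.mul_le.2 fun s hs r hr => mem_extAnnihilator.2 fun i Y x => by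
    obtain ⟨w, hw⟩ := (h.exact_extPullback (s • x)).1 (by
      rw [map_smul, mem_extAnnihilator.1 hs])
    rw [mul_comm, mul_smul, ← hw, ← map_smul, mem_extAnnihilator.1 hr, map_zero]

theorem extAnnihilator_mul_le_left (h : IsSES f g) :
    extAnnihilator B * extAnnihilator C ≤ extAnnihilator A :=
  Ideal.mul_le.2 fun s hs r hr => mem_extAnnihilator.2 fun i Y x => by
    obtain ⟨w, hw⟩ := (h.exact_extPullback_contravariantδ (r • x)).1 (by
      rw [map_smul, mem_extAnnihilator.1 hr])
    rw [mul_smul, ← hw, ← map_smul, mem_extAnnihilator.1 hs, map_zero]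

end IsSES

section NonfreeLocus

variable [Module.Finite R M]

open LocalizedModule in
theorem exists_mem_extAnnihilator_notMem [IsNoetherianRing R] (p : Ideal R) [p.IsPrime]
    (hp : Module.Free (Localization.AtPrime p) (LocalizedModule p.primeCompl M)) :
    ∃ s ∈ extAnnihilator M, s ∉ p := by
  obtain ⟨K, F, f, g, _, _, h⟩ := exists_free_cover M
  have : Module.Projective (Localization p.primeCompl) (LocalizedModule p.primeCompl M) :=
    @Module.Projective.of_free _ _ _ _ _ hp
  obtain ⟨σ, hσ⟩ : ∃ σ, map p.primeCompl g ∘ₗ σ = LinearMap.id :=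
    Module.projective_lifting_property (P := LocalizedModule p.primeCompl M)
      (R := Localization p.primeCompl) (map p.primeCompl g) LinearMap.id (map_surjective _ g h.2.1)
  have := Module.finitePresentation_of_finite R M
  obtain ⟨a, v, ha⟩ := Module.FinitePresentation.exists_lift_of_isLocalizedModule p.primeCompl
    (mkLinearMap p.primeCompl F) (σ.restrictScalars R ∘ₗ mkLinearMap p.primeCompl M)
  have hga : mkLinearMap p.primeCompl M ∘ₗ (g ∘ₗ a) =
      mkLinearMap p.primeCompl M ∘ₗ (v • LinearMap.id) := by
    ext x
    calc
      mkLinearMap p.primeCompl M (g (a x))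
        = map p.primeCompl g (mkLinearMap p.primeCompl F (a x)) := by simp [mkLinearMap_apply]
      _ = map p.primeCompl g (v • σ (mkLinearMap p.primeCompl M x)) :=
          congrArg (map p.primeCompl g) (LinearMap.congr_fun ha x)
      _ = v • mkLinearMap p.primeCompl M x := by
          rw [LinearMap.map_smul_of_tower]
          exact congrArg (v • ·) (LinearMap.congr_fun hσ _)
      _ = mkLinearMap p.primeCompl M (v • x) := (LinearMap.map_smul_of_tower _ _ _).symm
  obtain ⟨t, ht⟩ :=
    Module.Finite.exists_smul_of_comp_eq_of_isLocalizedModule p.primeCompl _ _ _ hga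
  refine ⟨t * v, mem_extAnnihilator_of_factor ((t : R) • a) g ?_, (t * v).2⟩
  rw [LinearMap.comp_smul, mul_smul]
  exact ht

theorem free_localizedModule_of_mem_extAnnihilator (p : Ideal R) [p.IsPrime]
    (hs : s ∈ extAnnihilator M) (hsp : s ∉ p) :
    Module.Free (Localization.AtPrime p) (LocalizedModule p.primeCompl M) := by
  obtain ⟨K, F, f, g, _, _, h⟩ := exists_free_cover M
  obtain ⟨a, ha⟩ := exists_lift_smul_id h hs
  have : Module.Free (Localization.AtPrime p) (LocalizedModule p.primeCompl F) :=
    Module.free_of_isLocalizedModule p.primeCompl (LocalizedModule.mkLinearMap p.primeCompl F)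
  obtain ⟨v, hv⟩ : IsUnit (algebraMap R (Localization.AtPrime p) s) :=
    IsLocalization.map_units (M := p.primeCompl) (Localization.AtPrime p) ⟨s, hsp⟩
  have hga : LocalizedModule.map p.primeCompl g ∘ₗ LocalizedModule.map p.primeCompl a =
      (v : Localization.AtPrime p) • LinearMap.id := by
    ext x
    induction x using LocalizedModule.induction_on with
    | h m r => simpa [LocalizedModule.smul'_mk, hv] using
        congrArg (LocalizedModule.mk · r) (LinearMap.congr_fun ha m)
  have : Module.Projective (Localization.AtPrime p) (LocalizedModule p.primeCompl M) :=
    .of_split (LocalizedModule.map p.primeCompl a)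
      ((↑v⁻¹ : Localization.AtPrime p) • LocalizedModule.map p.primeCompl g) (by
        rw [LinearMap.smul_comp, hga, smul_smul, Units.inv_mul, one_smul])
  have : Module.Flat (Localization.AtPrime p) (LocalizedModule p.primeCompl M) :=
    @Module.Flat.of_projective _ _ _ _ _ this
  exact Module.free_of_flat_of_isLocalRing

theorem NF_eq_zeroLocus [IsNoetherianRing R] :
    NF R M = PrimeSpectrum.zeroLocus (extAnnihilator M) := by
  ext p
  rw [PrimeSpectrum.mem_zeroLocus, SetLike.coe_subset_coe]
  refine ⟨fun hp s hs => ?_, fun hp hfree => ?_⟩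
  · by_contra hsp
    exact hp (free_localizedModule_of_mem_extAnnihilator p.asIdeal hs hsp)
  · obtain ⟨s, hs, hsp⟩ := exists_mem_extAnnihilator_notMem p.asIdeal hfree
    exact hsp (hp hs)

end NonfreeLocus

end ExtAnnihilator

section PuncturedSpectrum

variable [IsLocalRing R] {A B C M N : ModuleCat.{u} R} {n m : ℕ}

theorem forall_free_localizedModule_iff [IsNoetherianRing R] [Module.Finite R M] :
    (∀ p : PrimeSpectrum R, p.asIdeal ≠ IsLocalRing.maximalIdeal R →
      Module.Free (Localization.AtPrime p.asIdeal) (LocalizedModule p.asIdeal.primeCompl M)) ↔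
    PrimeSpectrum.zeroLocus (extAnnihilator M) ⊆ {IsLocalRing.closedPoint R} := by
  rw [← NF_eq_zeroLocus]
  refine forall_congr' fun p => ?_
  rw [Set.mem_singleton_iff, PrimeSpectrum.ext_iff]
  exact not_imp_comm

theorem mem_PD0_iff : M ∈ PD0 R ↔ ∃ n, M ∈ PD0n R n :=
  ⟨fun ⟨hfin, ⟨n, hpd⟩, hfree⟩ => ⟨n, hfin, hpd, hfree⟩,
    fun ⟨n, hfin, hpd, hfree⟩ => ⟨hfin, ⟨n, hpd⟩, hfree⟩⟩

variable [IsNoetherianRing R]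

theorem mem_PD0n_iff : M ∈ PD0n R n ↔ Module.Finite R M ∧ HasProjectiveDimensionLT M (n + 1) ∧
    PrimeSpectrum.zeroLocus (extAnnihilator M) ⊆ {IsLocalRing.closedPoint R} :=
  and_congr_right fun _ =>
    and_congr (pdLE_iff_hasProjectiveDimensionLT n) forall_free_localizedModule_iff

theorem PD0n_mono (hnm : n ≤ m) : PD0n R n ⊆ PD0n R m := fun M hM =>
  have ⟨hfin, hpd, hloc⟩ := mem_PD0n_iff.1 hM
  mem_PD0n_iff.2 ⟨hfin, hasProjectiveDimensionLT_of_ge M (n + 1) (m + 1) (by lia), hloc⟩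

theorem mem_PD0n_of_projective [Module.Finite R M] [Module.Projective R M] : M ∈ PD0n R n :=
  mem_PD0n_iff.2 ⟨inferInstance, hasProjectiveDimensionLT_of_projective n, by
    rw [extAnnihilator_eq_top_of_projective]
    simp⟩

theorem mem_PD0n_of_retract (hM : M ∈ PD0n R n) (a : N →ₗ[R] M) (b : M →ₗ[R] N)
    (hab : b ∘ₗ a = LinearMap.id) : N ∈ PD0n R n := by
  obtain ⟨_, _, hloc⟩ := mem_PD0n_iff.1 hM
  exact mem_PD0n_iff.2 ⟨.of_surjective b fun x => ⟨a x, LinearMap.congr_fun hab x⟩,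
    hasProjectiveDimensionLT_of_retract a b hab,
    (PrimeSpectrum.zeroLocus_anti_mono_ideal (extAnnihilator_le_of_retract a b hab)).trans hloc⟩

namespace IsSES

variable {f : A →ₗ[R] B} {g : B →ₗ[R] C}

theorem middle_mem_PD0n (h : IsSES f g) (hA : A ∈ PD0n R n) (hC : C ∈ PD0n R n) :
    B ∈ PD0n R n := by
  obtain ⟨_, hpdA, hlocA⟩ := mem_PD0n_iff.1 hA
  obtain ⟨_, hpdC, hlocC⟩ := mem_PD0n_iff.1 hC
  refine mem_PD0n_iff.2 ⟨.of_exact h.exact h.2.1,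
    h.shortExact.hasProjectiveDimensionLT_X₂ _ hpdA hpdC,
    (PrimeSpectrum.zeroLocus_anti_mono_ideal h.extAnnihilator_mul_le_middle).trans ?_⟩
  rw [PrimeSpectrum.zeroLocus_mul]
  exact Set.union_subset hlocA hlocC

theorem left_mem_PD0n (h : IsSES f g) [HasProjectiveDimensionLT A (n + 1)]
    (hB : B ∈ PD0n R m) (hC : C ∈ PD0n R m) : A ∈ PD0n R n := by
  obtain ⟨_, _, hlocB⟩ := mem_PD0n_iff.1 hB
  obtain ⟨_, _, hlocC⟩ := mem_PD0n_iff.1 hC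
  refine mem_PD0n_iff.2 ⟨.of_injective f h.1, inferInstance,
    (PrimeSpectrum.zeroLocus_anti_mono_ideal h.extAnnihilator_mul_le_left).trans ?_⟩
  rw [PrimeSpectrum.zeroLocus_mul]
  exact Set.union_subset hlocB hlocC

theorem kernel_mem_PD0n (h : IsSES f g) (hB : B ∈ PD0n R n) (hC : C ∈ PD0n R n) :
    A ∈ PD0n R n :=
  have := h.shortExact.hasProjectiveDimensionLT_X₁ (n + 1) (mem_PD0n_iff.1 hB).2.1
    (mem_PD0n_iff.1 (PD0n_mono n.le_succ hC)).2.1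
  h.left_mem_PD0n hB hC

theorem syzygy_mem_PD0n (h : IsSES f g) [Module.Finite R B] [Module.Projective R B]
    (hC : C ∈ PD0n R (n + 1)) : A ∈ PD0n R n :=
  have := h.shortExact.hasProjectiveDimensionLT_X₁ (n + 1)
    (hasProjectiveDimensionLT_of_projective n) (mem_PD0n_iff.1 hC).2.1
  h.left_mem_PD0n mem_PD0n_of_projective hC

end IsSES

theorem isResolving_PD0n (n : ℕ) : IsResolving R (PD0n R n) where
  fg _ hM := hM.1
  iso_closed _ _ := fun ⟨e⟩ hM => mem_PD0n_of_retract hM e.symm.toLinearMap e.toLinearMap (by simp)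
  proj_mem _ _ _ := mem_PD0n_of_projective
  summand_closed M N hMN := mem_PD0n_of_retract (M := ModuleCat.of R (M × N)) hMN
    (LinearMap.inl R M N) (LinearMap.fst R M N) (LinearMap.fst_comp_inl R M N)
  ext_closed _ _ _ _ _ h hA hC := h.middle_mem_PD0n hA hC
  syzygy_closed _ _ _ _ _ h _ _ _ hM := h.kernel_mem_PD0n mem_PD0n_of_projective hM

end PuncturedSpectrum

section StableKernel

variable {E F K N T Y : ModuleCat.{u} R} {i n : ℕ}

/-- `K → N → T` is a kernel of `N → T` in the stable category: there is a short exact sequence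
`0 → K → N ⊕ F → T → 0` with `F` finite free whose components are the two given maps. -/
def IsStableKernel (κ : K →ₗ[R] N) (φ : N →ₗ[R] T) : Prop :=
  ∃ (F : ModuleCat.{u} R) (α : K →ₗ[R] F) (p : F →ₗ[R] T), Module.Finite R F ∧ Module.Free R F ∧
    IsSES (κ.prod α) (φ.coprod p)

theorem exists_isStableKernel [Module.Finite R T] (φ : N →ₗ[R] T) :
    ∃ (K : ModuleCat.{u} R) (κ : K →ₗ[R] N), IsStableKernel κ φ := by
  obtain ⟨_, F, _, p, _, _, h⟩ := exists_free_cover T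
  have hsurj : Function.Surjective (φ.coprod p) := fun x =>
    have ⟨y, hy⟩ := h.2.1 x
    ⟨(0, y), by simp [hy]⟩
  exact ⟨ModuleCat.of R (LinearMap.ker (φ.coprod p)),
    LinearMap.fst R N F ∘ₗ (LinearMap.ker (φ.coprod p)).subtype, F,
    LinearMap.snd R N F ∘ₗ (LinearMap.ker (φ.coprod p)).subtype, p, inferInstance, inferInstance,
    .subtype_ker hsurj⟩

theorem extPullback_extPullback_of_add_eq_id [Module.Projective R F] {ρ : E →ₗ[R] N} {ι : N →ₗ[R] E}
    {q : E →ₗ[R] F} {b : F →ₗ[R] E} (hid : ι ∘ₗ ρ + b ∘ₗ q = LinearMap.id)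
    (x : Ext E Y (i + 1)) : extPullback ρ (extPullback ι x) = x := by
  have hx : extPullback (ι ∘ₗ ρ + b ∘ₗ q) x = x := by rw [hid, extPullback_id]
  rwa [map_add, LinearMap.add_apply, extPullback_comp, extPullback_comp,
    ext_eq_zero_of_projective (extPullback b x), map_zero, add_zero] at hx

namespace IsStableKernel

variable {κ : K →ₗ[R] N} {φ : N →ₗ[R] T}

theorem exists_isSES (h : IsStableKernel κ φ) :
    ∃ (E : ModuleCat.{u} R) (f : K →ₗ[R] E) (g : E →ₗ[R] T) (ρ : E →ₗ[R] N) (ι : N →ₗ[R] E),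
      IsSES f g ∧ ρ ∘ₗ f = κ ∧ g ∘ₗ ι = φ ∧
      ∀ (Y : ModuleCat.{u} R) (i : ℕ) (x : Ext E Y (i + 1)), extPullback ρ (extPullback ι x) = x :=
  have ⟨F, α, p, _, _, hses⟩ := h
  ⟨ModuleCat.of R (N × F), κ.prod α, φ.coprod p, LinearMap.fst R N F, LinearMap.inl R N F, hses,
    LinearMap.fst_prod κ α, LinearMap.coprod_inl φ p, fun _ _ =>
      extPullback_extPullback_of_add_eq_id (E := ModuleCat.of R (N × F)) (q := LinearMap.snd R N F)
        (b := LinearMap.inr R N F) (by ext <;> simp)⟩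

theorem extPullback_extPullback_eq_zero (h : IsStableKernel κ φ) (x : Ext T Y (i + 1)) :
    extPullback κ (extPullback φ x) = 0 := by
  obtain ⟨E, f, g, ρ, ι, hses, rfl, rfl, hsplit⟩ := h.exists_isSES
  rw [extPullback_comp, extPullback_comp, hsplit, hses.exact_extPullback.apply_apply_eq_zero]

theorem surjective_extPullback (h : IsStableKernel κ φ)
    (hφ : Function.Injective (extPullback (Y := Y) (i := i + 2) φ)) :
    Function.Surjective (extPullback (Y := Y) (i := i + 1) κ) := by
  obtain ⟨E, f, g, ρ, ι, hses, rfl, rfl, hsplit⟩ := h.exists_isSES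
  intro y
  have hδ : hses.contravariantδ y = 0 := hφ (by
    rw [extPullback_comp, hses.exact_contravariantδ_extPullback.apply_apply_eq_zero, map_zero,
      map_zero])
  obtain ⟨z, rfl⟩ := (hses.exact_extPullback_contravariantδ y).1 hδ
  exact ⟨extPullback ι z, by rw [extPullback_comp, hsplit]⟩

theorem mem_of_isExtClosed (h : IsStableKernel κ φ) {𝒳 : Set (ModuleCat.{u} R)}
    (h𝒳 : IsExtClosed R 𝒳) (hK : K ∈ 𝒳) (hT : T ∈ 𝒳) : N ∈ 𝒳 :=
  have ⟨F, _, _, _, _, hses⟩ := h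
  h𝒳.2.1 N F (h𝒳.2.2 K _ T _ _ hses hK hT)

theorem mem_PD0n [IsLocalRing R] [IsNoetherianRing R] (h : IsStableKernel κ φ) (hN : N ∈ PD0n R n)
    (hT : T ∈ PD0n R n) : K ∈ PD0n R n :=
  have ⟨F, _, _, _, _, hses⟩ := h
  hses.kernel_mem_PD0n (B := ModuleCat.of R (N × F))
    ((IsSES.inl_snd N F).middle_mem_PD0n hN mem_PD0n_of_projective) hT

end IsStableKernel

end StableKernel

section ResidueTranspose

theorem IsSES.exists_comp_eq_smul_id {A B C : ModuleCat.{u} R} {f : A →ₗ[R] B} {g : B →ₗ[R] C}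
    (h : IsSES f g) {s : R} (c : B →ₗ[R] A) (hc : c ∘ₗ f = s • LinearMap.id) :
    ∃ v : C →ₗ[R] B, g ∘ₗ v = s • LinearMap.id := by
  obtain ⟨v, hv⟩ := h.exists_desc (s • LinearMap.id - f ∘ₗ c) (by
    rw [LinearMap.sub_comp, LinearMap.comp_assoc, hc, LinearMap.smul_comp, LinearMap.comp_smul,
      LinearMap.id_comp, LinearMap.comp_id, sub_self])
  refine ⟨v, (LinearMap.cancel_right h.2.1).1 ?_⟩
  rw [LinearMap.comp_assoc, hv, LinearMap.comp_sub, ← LinearMap.comp_assoc,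
    h.exact.linearMap_comp_eq_zero, LinearMap.zero_comp, sub_zero, LinearMap.comp_smul,
    LinearMap.comp_id, LinearMap.smul_comp, LinearMap.id_comp]

theorem exists_extension_of_functionals {A B F : Type u} [AddCommGroup A] [Module R A]
    [AddCommGroup B] [Module R B] [AddCommGroup F] [Module R F] [Module.Finite R F]
    [Module.Free R F] (f : A →ₗ[R] B) (v : A →ₗ[R] F)
    (h : ∀ χ : Module.Dual R F, ∃ w : Module.Dual R B, w ∘ₗ f = χ ∘ₗ v) :
    ∃ w : B →ₗ[R] F, w ∘ₗ f = v := by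
  let b := Module.Free.chooseBasis R F
  choose w hw using fun i => h (b.coord i)
  refine ⟨b.equivFun.symm.toLinearMap ∘ₗ LinearMap.pi w, LinearMap.ext fun x => ?_⟩
  refine b.equivFun.injective (funext fun i => ?_)
  simp only [LinearMap.comp_apply, LinearEquiv.coe_coe, LinearEquiv.apply_symm_apply,
    LinearMap.pi_apply]
  exact LinearMap.congr_fun (hw i) x

section

variable {H N T T' Y : ModuleCat.{u} R} {i j n : ℕ}

theorem IsSES.comp_contravariantδ {f : T' →ₗ[R] H} {g : H →ₗ[R] T} (h : IsSES f g) (y : Ext N T i)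
    (x : Ext T' Y j) (hn : i + (j + 1) = n) :
    y.comp (h.contravariantδ x) hn = (h.covariantδ y).comp x (by lia) :=
  (Ext.comp_assoc y _ x rfl (add_comm 1 j) (by lia)).symm

theorem ring_end_eq_smul_id (a : ModuleCat.of R R →ₗ[R] ModuleCat.of R R) :
    a = a (1 : R) • LinearMap.id :=
  LinearMap.ext_ring (mul_one (a (1 : R))).symm

theorem extPushforward_ring_end (a : ModuleCat.of R R →ₗ[R] ModuleCat.of R R)
    (x : Ext N (ModuleCat.of R R) i) : extPushforward a x = (a (1 : R) : R) • x := by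
  rw [ring_end_eq_smul_id a, map_smul, LinearMap.smul_apply, extPushforward_id]
  simp

end

variable [IsLocalRing R] {H N T T' : ModuleCat.{u} R} {i j n : ℕ}

/-- An intrinsic form of `Tr Ω^j k`, where `k` is the residue field: `Tr k` is the cokernel of an
element of a finite free module whose coordinates generate the maximal ideal, and `Tr Ω^(j+1) k` is
the cokernel of a map from `Tr Ω^j k` to a finite free module which is surjective on duals. -/
def IsResidueTranspose : ℕ → ModuleCat.{u} R → Prop
  | 0, T => ∃ (H : ModuleCat.{u} R) (f : ModuleCat.of R R →ₗ[R] H) (g : H →ₗ[R] T),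
      Module.Finite R H ∧ Module.Free R H ∧ IsSES f g ∧
      LinearMap.range (Module.Dual.eval R H (f (1 : R))) = IsLocalRing.maximalIdeal R
  | j + 1, T => ∃ (T' H : ModuleCat.{u} R) (f : T' →ₗ[R] H) (g : H →ₗ[R] T),
      IsResidueTranspose j T' ∧ Module.Finite R H ∧ Module.Free R H ∧ IsSES f g ∧
      Function.Surjective f.dualMap

namespace IsResidueTranspose

theorem finite (hT : IsResidueTranspose j T) : Module.Finite R T := by
  cases j with
  | zero =>
    obtain ⟨H, f, g, _, _, h, _⟩ := hT
    exact .of_surjective g h.2.1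
  | succ j =>
    obtain ⟨T', H, f, g, _, _, _, h, _⟩ := hT
    exact .of_surjective g h.2.1

theorem hasProjectiveDimensionLT (hT : IsResidueTranspose j T) :
    HasProjectiveDimensionLT T (j + 2) := by
  induction j generalizing T with
  | zero =>
    obtain ⟨H, f, g, _, _, h, _⟩ := hT
    have : Module.Projective R (ModuleCat.of R R) := inferInstanceAs (Module.Projective R R)
    exact h.shortExact.hasProjectiveDimensionLT_X₃ 1 (hasProjectiveDimensionLT_of_projective _)
      (hasProjectiveDimensionLT_of_projective _)
  | succ j ih =>
    obtain ⟨T', H, f, g, hT', _, _, h, _⟩ := hT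
    exact h.shortExact.hasProjectiveDimensionLT_X₃ _ (ih hT')
      (hasProjectiveDimensionLT_of_projective _)

theorem maximalIdeal_le_extAnnihilator (hT : IsResidueTranspose j T) :
    IsLocalRing.maximalIdeal R ≤ extAnnihilator T := by
  intro s hs
  induction j generalizing T with
  | zero =>
    obtain ⟨H, f, g, _, _, h, hf⟩ := hT
    obtain ⟨ψ, hψ⟩ := hf.ge hs
    obtain ⟨v, hv⟩ := h.exists_comp_eq_smul_id ψ (s := s) (by
      rw [← hψ]
      exact ring_end_eq_smul_id (ψ ∘ₗ f))
    exact mem_extAnnihilator_of_factor v g hv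
  | succ j ih =>
    obtain ⟨T', H, f, g, hT', _, _, h, hf⟩ := hT
    have := hT'.finite
    obtain ⟨_, G, _, b, _, _, hG⟩ := exists_free_cover T'
    obtain ⟨a, ha⟩ := exists_lift_smul_id hG (ih hT')
    obtain ⟨w, hw⟩ := exists_extension_of_functionals f a fun χ => hf (χ ∘ₗ a)
    obtain ⟨v, hv⟩ := h.exists_comp_eq_smul_id (b ∘ₗ w) (by rw [LinearMap.comp_assoc, hw, ha])
    exact mem_extAnnihilator_of_factor v g hv

theorem mem_PD0n [IsNoetherianRing R] (hT : IsResidueTranspose j T) : T ∈ PD0n R (j + 1) :=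
  mem_PD0n_iff.2 ⟨hT.finite, hT.hasProjectiveDimensionLT, fun p hp => PrimeSpectrum.ext
    ((IsLocalRing.maximalIdeal.isMaximal R).eq_of_le p.2.ne_top
      (hT.maximalIdeal_le_extAnnihilator.trans hp)).symm⟩

theorem subsingleton_ext (hT : IsResidueTranspose j T) (hij : i < j) :
    Subsingleton (Ext T (ModuleCat.of R R) (i + 1)) := by
  refine subsingleton_of_forall_eq 0 fun x => ?_
  induction j generalizing T i with
  | zero => lia
  | succ j ih =>
    obtain ⟨T', H, f, g, hT', _, _, h, hf⟩ := hT
    obtain ⟨w, rfl⟩ := (h.exact_contravariantδ_extPullback x).1 (ext_eq_zero_of_projective _)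
    cases i with
    | zero =>
      obtain ⟨φ, rfl⟩ := homExt.surjective w
      obtain ⟨ψ, rfl⟩ := hf φ
      rw [LinearMap.dualMap_apply', ← extPullback_homExt]
      exact h.exact_extPullback_contravariantδ.apply_apply_eq_zero _
    | succ i => rw [ih (i := i) hT' (by lia) w, map_zero]

end IsResidueTranspose

/-- `θ` is a fundamental class of `T` in degree `j`: it generates `Ext^j(T, R)`, it is nonzero,
and classes in `Ext^n(N, R)` killed by the maximal ideal are products of `θ` with classes in
`Ext^i(N, T)`, where `n = i + j`, provided that `Ext^l(N, R) = 0` for `i < l < n`. -/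
structure IsFundamentalClass (θ : Ext T (ModuleCat.of R R) j) : Prop where
  exists_smul_eq : ∀ x, ∃ r : R, r • θ = x
  ne_zero : θ ≠ 0
  exists_comp_eq : ∀ (i n : ℕ) (hn : i + j = n) (N : ModuleCat.{u} R),
    (∀ l, i < l → l < n → Subsingleton (Ext N (ModuleCat.of R R) l)) →
    ∀ ξ : Ext N (ModuleCat.of R R) n, (∀ s ∈ IsLocalRing.maximalIdeal R, s • ξ = 0) →
    ∃ y : Ext N T i, y.comp θ hn = ξ

namespace IsFundamentalClass

variable {f : T' →ₗ[R] H} {g : H →ₗ[R] T}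

theorem contravariantδ_id {f : ModuleCat.of R R →ₗ[R] H} [Module.Finite R H] [Module.Free R H]
    (h : IsSES f g)
    (hf : LinearMap.range (Module.Dual.eval R H (f (1 : R))) = IsLocalRing.maximalIdeal R) :
    IsFundamentalClass (h.contravariantδ (homExt (LinearMap.id : _ →ₗ[R] ModuleCat.of R R))) where
  exists_smul_eq x := by
    obtain ⟨w, rfl⟩ := (h.exact_contravariantδ_extPullback x).1 (ext_eq_zero_of_projective _)
    obtain ⟨φ, rfl⟩ := homExt.surjective w
    exact ⟨φ (1 : R), by rw [← map_smul, ← map_smul, ← ring_end_eq_smul_id]⟩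
  ne_zero hzero := by
    obtain ⟨z, hz⟩ := (h.exact_extPullback_contravariantδ _).1 hzero
    obtain ⟨ψ, rfl⟩ := homExt.surjective z
    rw [extPullback_homExt] at hz
    have hψ : ψ (f (1 : R)) = (1 : R) := LinearMap.congr_fun (homExt.injective hz) (1 : R)
    exact (IsLocalRing.maximalIdeal.isMaximal R).ne_top
      ((Ideal.eq_top_iff_one _).2 (hf ▸ ⟨ψ, hψ⟩))
  exists_comp_eq i n hn N _ ξ hξ := by
    subst hn
    have hfξ : extPushforward f ξ = 0 := ext_eq_zero_of_functionals _ fun ψ => by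
      rw [← extPushforward_comp, extPushforward_ring_end]
      exact hξ _ (hf.le ⟨ψ, rfl⟩)
    obtain ⟨y, rfl⟩ := (h.exact_covariantδ_extPushforward ξ).1 hfξ
    exact ⟨y, (h.comp_contravariantδ y _ _).trans (extPushforward_id _)⟩

theorem contravariantδ {θ : Ext T' (ModuleCat.of R R) (j + 1)} (hθ : IsFundamentalClass θ)
    [Module.Finite R H] [Module.Free R H] (h : IsSES f g) :
    IsFundamentalClass (h.contravariantδ θ) where
  exists_smul_eq x := by
    obtain ⟨w, rfl⟩ := (h.exact_contravariantδ_extPullback x).1 (ext_eq_zero_of_projective _)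
    obtain ⟨r, rfl⟩ := hθ.exists_smul_eq w
    exact ⟨r, (map_smul _ _ _).symm⟩
  ne_zero hzero := by
    obtain ⟨z, hz⟩ := (h.exact_extPullback_contravariantδ _).1 hzero
    rw [ext_eq_zero_of_projective z, map_zero] at hz
    exact hθ.ne_zero hz.symm
  exists_comp_eq i n hn N hN ξ hξ := by
    obtain ⟨z, rfl⟩ := hθ.exists_comp_eq (i + 1) n (by lia) N (fun l hl => hN l (by lia)) ξ hξ
    have := hN (i + 1) (by lia) (by lia)
    obtain ⟨y, rfl⟩ := (h.exact_covariantδ_extPushforward z).1 (subsingleton_ext_of_free.elim _ _)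
    exact ⟨y, h.comp_contravariantδ y _ _⟩

end IsFundamentalClass

namespace IsResidueTranspose

theorem exists_isFundamentalClass (hT : IsResidueTranspose j T) :
    ∃ θ : Ext T (ModuleCat.of R R) (j + 1), IsFundamentalClass θ := by
  induction j generalizing T with
  | zero =>
    obtain ⟨H, f, g, _, _, h, hf⟩ := hT
    exact ⟨_, .contravariantδ_id h hf⟩
  | succ j ih =>
    obtain ⟨T', H, f, g, hT', _, _, h, _⟩ := hT
    obtain ⟨θ, hθ⟩ := ih hT'
    exact ⟨_, hθ.contravariantδ h⟩

theorem not_hasProjectiveDimensionLT (hT : IsResidueTranspose j T) :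
    ¬ HasProjectiveDimensionLT T (j + 1) := fun _ =>
  have ⟨θ, hθ⟩ := hT.exists_isFundamentalClass
  hθ.ne_zero (θ.eq_zero_of_hasProjectiveDimensionLT (j + 1) le_rfl)

end IsResidueTranspose

end ResidueTranspose

section MinimalFreeResolution

open scoped TensorProduct

variable [IsLocalRing R] {i n : ℕ}

theorem exists_minimal_free_cover (M : ModuleCat.{u} R) [Module.Finite R M] :
    ∃ (K F : ModuleCat.{u} R) (f : K →ₗ[R] F) (g : F →ₗ[R] M), Module.Finite R F ∧
      Module.Free R F ∧ IsSES f g ∧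
      LinearMap.ker g ≤ IsLocalRing.maximalIdeal R • (⊤ : Submodule R F) := by
  have : Module.Free (IsLocalRing.ResidueField R)
      (IsLocalRing.ResidueField R ⊗[R] M) := .of_divisionRing _ _
  let b := Module.finBasis (IsLocalRing.ResidueField R)
    (IsLocalRing.ResidueField R ⊗[R] M)
  choose m hm using fun i =>
    TensorProduct.mk_surjective R M (IsLocalRing.ResidueField R) Ideal.Quotient.mk_surjective (b i)
  let g := Fintype.linearCombination R m
  have hg : Function.Surjective g := by
    rw [← LinearMap.range_eq_top, Fintype.range_linearCombination]
    exact IsLocalRing.span_eq_top_of_tmul_eq_basis m b hm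
  refine ⟨ModuleCat.of R (LinearMap.ker g), ModuleCat.of R (Fin _ → R), _, g,
    inferInstanceAs (Module.Finite R (Fin _ → R)), inferInstanceAs (Module.Free R (Fin _ → R)),
    .subtype_ker hg, fun x hx => ?_⟩
  have hb : ∑ i, IsLocalRing.residue R (x i) • b i = 0 := calc
    _ = (1 : IsLocalRing.ResidueField R) ⊗ₜ[R] g x := by
      simp only [← hm, ← IsLocalRing.ResidueField.algebraMap_eq, algebraMap_smul, g,
        Fintype.linearCombination_apply, TensorProduct.tmul_sum, TensorProduct.tmul_smul,
        TensorProduct.mk_apply]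
    _ = 0 := by rw [LinearMap.mem_ker.1 hx, TensorProduct.tmul_zero]
  have hx : ∀ i, x i ∈ IsLocalRing.maximalIdeal R := fun i =>
    IsLocalRing.residue_eq_zero_iff _ |>.1
      (Fintype.linearIndependent_iff.1 b.linearIndependent _ hb i)
  rw [pi_eq_sum_univ' x]
  exact Submodule.sum_mem _ fun i _ => Submodule.smul_mem_smul (hx i) trivial

theorem eq_top_of_map_eq_top {F M : Type u} [AddCommGroup F] [Module R F] [Module.Finite R F]
    [AddCommGroup M] [Module R M] {g : F →ₗ[R] M}
    (hg : LinearMap.ker g ≤ IsLocalRing.maximalIdeal R • ⊤) {N : Submodule R F}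
    (hN : N.map g = ⊤) : N = ⊤ := by
  refine IsLocalRing.map_mkQ_eq_top.1 ?_
  have hsup : N ⊔ LinearMap.ker g = ⊤ := by rw [← Submodule.comap_map_eq, hN, Submodule.comap_top]
  rw [← Submodule.range_mkQ, Submodule.map_eq_range_iff, Submodule.ker_mkQ]
  exact (codisjoint_iff.2 hsup).mono_right hg

namespace IsMinSyz

variable {M K : ModuleCat.{u} R}

theorem exists_isSES (h : IsMinSyz R (n + 1) M K) :
    ∃ (L G : ModuleCat.{u} R) (i : K →ₗ[R] G) (q : G →ₗ[R] L), IsMinSyz R n M L ∧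
      Module.Finite R G ∧ Module.Free R G ∧ IsSES i q ∧
      LinearMap.ker q ≤ IsLocalRing.maximalIdeal R • (⊤ : Submodule R G) := by
  induction n generalizing M with
  | zero =>
    obtain ⟨F, g, K', i, hfin, hfree, hg, hmin, hi, hex, ⟨e⟩⟩ := h
    refine ⟨M, F, i ∘ₗ e.toLinearMap, g, ⟨.refl _ _⟩, hfin, hfree,
      ⟨hi.comp e.injective, hg, ?_⟩, hmin⟩
    rw [← hex, LinearMap.range_comp, LinearEquiv.range, Submodule.map_top]
  | succ n ih =>
    obtain ⟨F, g, K', i, hfin, hfree, hg, hmin, hi, hex, hK⟩ := h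
    obtain ⟨L, G, i', q, hL, hq⟩ := ih hK
    exact ⟨L, G, i', q, ⟨F, g, K', i, hfin, hfree, hg, hmin, hi, hex, hL⟩, hq⟩

theorem subsingleton_ext {Y : ModuleCat.{u} R} (h : IsMinSyz R n M K)
    (hM : Subsingleton (Ext M Y (i + n + 1))) : Subsingleton (Ext K Y (i + 1)) := by
  induction n generalizing K i with
  | zero =>
    obtain ⟨e⟩ := h
    refine (Function.LeftInverse.injective (g := extPullback e.toLinearMap)
      (f := extPullback e.symm.toLinearMap) fun x => ?_).subsingleton
    rw [← extPullback_comp, LinearEquiv.symm_comp, extPullback_id]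
  | succ n ih =>
    obtain ⟨L, G, f, g, hL, _, _, hses, _⟩ := h.exists_isSES
    have := ih (i := i + 1) hL (by convert hM using 2; lia)
    refine subsingleton_of_forall_eq 0 fun x => ?_
    obtain ⟨z, rfl⟩ := (hses.exact_extPullback_contravariantδ x).1 (Subsingleton.elim _ _)
    rw [ext_eq_zero_of_projective z, map_zero]

end IsMinSyz

theorem exists_isMinSyz [IsNoetherianRing R] (n : ℕ) (M : ModuleCat.{u} R) [Module.Finite R M] :
    ∃ K : ModuleCat.{u} R, Module.Finite R K ∧ IsMinSyz R n M K := by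
  induction n generalizing M with
  | zero => exact ⟨M, inferInstance, ⟨.refl _ _⟩⟩
  | succ n ih =>
    obtain ⟨L, F, f, g, _, _, h, hmin⟩ := exists_minimal_free_cover M
    have : Module.Finite R L := .of_injective f h.1
    obtain ⟨K, _, hK⟩ := ih L
    exact ⟨K, inferInstance, F, g, L, f, inferInstance, inferInstance, h.2.1, hmin, h.1, h.2.2, hK⟩

theorem exists_isTranspose [IsNoetherianRing R] (M : ModuleCat.{u} R) [Module.Finite R M] :
    ∃ T, IsTranspose R M T := by
  obtain ⟨L, F₀, f, g, _, _, h, hmin⟩ := exists_minimal_free_cover M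
  have : Module.Finite R L := .of_injective f h.1
  obtain ⟨_, F₁, _, q, _, _, hq, hmin'⟩ := exists_minimal_free_cover L
  refine ⟨ModuleCat.of R (Module.Dual R F₁ ⧸ LinearMap.range (f ∘ₗ q).dualMap), F₁, F₀, f ∘ₗ q, g,
    inferInstance, inferInstance, inferInstance, inferInstance, h.2.1, ?_, hmin, ?_, ⟨.refl _ _⟩⟩
  · rw [LinearMap.range_comp_of_range_eq_top _ (LinearMap.range_eq_top.2 hq.2.1), h.2.2]
  · rwa [LinearMap.ker_comp_of_ker_eq_bot _ (LinearMap.ker_eq_bot.2 h.1)]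

theorem exists_isTrOmega [IsNoetherianRing R] (n : ℕ) (M : ModuleCat.{u} R) [Module.Finite R M] :
    ∃ T, IsTrOmega R n M T :=
  have ⟨K, _, hK⟩ := exists_isMinSyz n M
  have ⟨T, hT⟩ := exists_isTranspose K
  ⟨T, K, hK, hT⟩

end MinimalFreeResolution

section Presentation

variable {G F₀ F₁ K L T : ModuleCat.{u} R} {j t : ℕ}

theorem exact_dualMap {d : F₁ →ₗ[R] F₀} {e : F₀ →ₗ[R] K} (hde : Function.Exact d e)
    (he : Function.Surjective e) : Function.Exact e.dualMap d.dualMap :=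
  LinearMap.exact_lcomp_of_exact_of_surjective R hde he

theorem range_dual_eval [Module.Finite R F₁] [Module.Free R F₁] (χ : Module.Dual R F₁) :
    LinearMap.range (Module.Dual.eval R _ χ) = LinearMap.range χ := by
  rw [← LinearMap.range_comp_of_range_eq_top _ (Module.evalEquiv R F₁).range]
  rfl

theorem IsSES.surjective_dualMap {f : K →ₗ[R] G} {g : G →ₗ[R] L} (h : IsSES f g)
    [Subsingleton (Ext L (ModuleCat.of R R) 1)] : Function.Surjective f.dualMap := fun φ => by
  obtain ⟨z, hz⟩ := (h.exact_extPullback_contravariantδ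
    (homExt (N := K) (Y := ModuleCat.of R R) φ)).1 (Subsingleton.elim _ _)
  obtain ⟨ψ, rfl⟩ := homExt.surjective z
  rw [extPullback_homExt] at hz
  exact ⟨ψ, homExt.injective hz⟩

variable [IsLocalRing R]

theorem nonempty_equiv_ring_of_minimal_cover [Module.Finite R F₀] [Module.Free R F₀]
    {e : F₀ →ₗ[R] residueMod R} (he : Function.Surjective e)
    (hmin : LinearMap.ker e ≤ IsLocalRing.maximalIdeal R • (⊤ : Submodule R F₀)) :
    Nonempty (F₀ ≃ₗ[R] R) := by
  obtain ⟨x, hx⟩ := he (1 : IsLocalRing.ResidueField R)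
  have hspan : Submodule.span R {x} = ⊤ := eq_top_of_map_eq_top hmin (by
    rw [Submodule.map_span, Set.image_singleton, hx, eq_top_iff]
    rintro y -
    obtain ⟨r, rfl⟩ := IsLocalRing.residue_surjective y
    exact Submodule.mem_span_singleton.2 ⟨r, (Algebra.smul_def r _).trans (mul_one _)⟩)
  have hle : Module.finrank R F₀ ≤ 1 := finrank_le_one x fun y =>
    Submodule.mem_span_singleton.1 (hspan ▸ Submodule.mem_top)
  have : Nontrivial F₀ := he.nontrivial
  exact ⟨LinearEquiv.ofFinrankEq F₀ R
    ((hle.antisymm ((Module.finrank_pos_iff_of_free R F₀).2 this)).trans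
      (Module.finrank_self R).symm)⟩

theorem map_ker_eq_maximalIdeal {e : F₀ →ₗ[R] residueMod R} (he : Function.Surjective e)
    (q : F₀ ≃ₗ[R] R) : (LinearMap.ker e).map q.toLinearMap = IsLocalRing.maximalIdeal R := by
  have hquot : (R ⧸ (LinearMap.ker e).map q.toLinearMap) ≃ₗ[R] R ⧸ IsLocalRing.maximalIdeal R :=
    (Submodule.Quotient.equiv _ _ q rfl).symm ≪≫ₗ e.quotKerEquivOfSurjective he
  rw [← Ideal.annihilator_quotient (I := (LinearMap.ker e).map q.toLinearMap),
    hquot.annihilator_eq, Ideal.annihilator_quotient]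

namespace IsResidueTranspose

theorem of_minimal_cover [Module.Finite R F₀] [Module.Free R F₀] [Module.Finite R F₁]
    [Module.Free R F₁] [Subsingleton (Ext (residueMod R) (ModuleCat.of R R) 0)]
    {d : F₁ →ₗ[R] F₀} {e : F₀ →ₗ[R] residueMod R} {c : Module.Dual R F₁ →ₗ[R] T}
    (he : Function.Surjective e) (hde : Function.Exact d e)
    (hmin : LinearMap.ker e ≤ IsLocalRing.maximalIdeal R • (⊤ : Submodule R F₀))
    (hc : Function.Surjective c) (hdc : Function.Exact d.dualMap c) :
    IsResidueTranspose 0 T := by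
  obtain ⟨q⟩ := nonempty_equiv_ring_of_minimal_cover he hmin
  let p : R ≃ₗ[R] Module.Dual R F₀ := (LinearMap.ringLmapEquivSelf R R R).symm ≪≫ₗ q.dualMap
  have hd : Function.Injective d.dualMap := (injective_iff_map_eq_zero _).2 fun χ hχ => by
    obtain ⟨w, rfl⟩ := (exact_dualMap hde he χ).1 hχ
    have : w = 0 := (homExt (N := residueMod R) (Y := ModuleCat.of R R)).injective
      (Subsingleton.elim _ _)
    rw [this, map_zero]
  refine ⟨ModuleCat.of R (Module.Dual R F₁), d.dualMap ∘ₗ p.toLinearMap, c,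
    inferInstanceAs (Module.Finite R (Module.Dual R F₁)),
    inferInstanceAs (Module.Free R (Module.Dual R F₁)), .of_exact (hd.comp p.injective) hc ?_, ?_⟩
  · exact p.surjective.comp_exact_iff_exact.2 hdc
  · have hp : d.dualMap (p (1 : R)) = q.toLinearMap ∘ₗ d := by ext; simp [p]
    rw [LinearMap.comp_apply, LinearEquiv.coe_coe, hp, range_dual_eval, LinearMap.range_comp,
      ← hde.linearMap_ker_eq, map_ker_eq_maximalIdeal he]

theorem of_presentation [Module.Finite R F₀] [Module.Free R F₀] [Module.Finite R F₁]
    [Module.Free R F₁] [Module.Free R G] [Subsingleton (Ext L (ModuleCat.of R R) 1)]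
    {d : F₁ →ₗ[R] F₀} {e : F₀ →ₗ[R] K} {c : Module.Dual R F₁ →ₗ[R] T} {f : K →ₗ[R] G}
    {g : G →ₗ[R] L} (he : Function.Surjective e) (hde : Function.Exact d e)
    (hc : Function.Surjective c) (hdc : Function.Exact d.dualMap c) (h : IsSES f g)
    (hT : IsResidueTranspose j
      (ModuleCat.of R (Module.Dual R F₀ ⧸ LinearMap.range (f ∘ₗ e).dualMap))) :
    IsResidueTranspose (j + 1) T := by
  have hker : LinearMap.ker d.dualMap = LinearMap.range (f ∘ₗ e).dualMap :=
    (h.surjective_dualMap.comp_exact_iff_exact.2 (exact_dualMap hde he)).linearMap_ker_eq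
  let f' := (LinearMap.range (f ∘ₗ e).dualMap).liftQ d.dualMap hker.ge
  have hses : IsSES f' c := .of_exact
    (LinearMap.ker_eq_bot.1 (Submodule.ker_liftQ_eq_bot _ _ _ hker.le)) hc
    (LinearMap.exact_iff.2 (by rw [Submodule.range_liftQ, hdc.linearMap_ker_eq]))
  refine ⟨_, ModuleCat.of R (Module.Dual R F₁), f', c, hT,
    inferInstanceAs (Module.Finite R (Module.Dual R F₁)),
    inferInstanceAs (Module.Free R (Module.Dual R F₁)), hses, fun φ => ?_⟩
  obtain ⟨v, hv⟩ := (Module.evalEquiv R F₀).surjective (φ ∘ₗ Submodule.mkQ _)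
  have hfev : f (e v) = 0 := (Module.forall_dual_apply_eq_zero_iff R _).1 fun ψ => by
    exact (LinearMap.congr_fun hv ((f ∘ₗ e).dualMap ψ)).trans
      ((congrArg φ ((Submodule.Quotient.mk_eq_zero _).2 ⟨ψ, rfl⟩)).trans (map_zero φ))
  obtain ⟨u, rfl⟩ := (hde v).1 (h.1 (hfev.trans (map_zero f).symm))
  exact ⟨Module.Dual.eval R F₁ u, Submodule.linearMap_qext _ hv⟩

theorem of_isMinSyz (hk : ∀ i < t, Subsingleton (Ext (residueMod R) (ModuleCat.of R R) i))
    (hj : j < t) (hK : IsMinSyz R j (residueMod R) K) [Module.Finite R F₀] [Module.Free R F₀]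
    [Module.Finite R F₁] [Module.Free R F₁] {d : F₁ →ₗ[R] F₀} {e : F₀ →ₗ[R] K}
    {c : Module.Dual R F₁ →ₗ[R] T} (he : Function.Surjective e) (hde : Function.Exact d e)
    (hmin : LinearMap.ker e ≤ IsLocalRing.maximalIdeal R • (⊤ : Submodule R F₀))
    (hc : Function.Surjective c) (hdc : Function.Exact d.dualMap c) :
    IsResidueTranspose j T := by
  induction j generalizing F₀ F₁ K T with
  | zero =>
    obtain ⟨ι⟩ := hK
    have := hk 0 hj
    exact of_minimal_cover (e := ι.toLinearMap ∘ₗ e) (ι.surjective.comp he)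
      (ι.injective.comp_exact_iff_exact.2 hde)
      (by rwa [LinearMap.ker_comp_of_ker_eq_bot _ ι.ker]) hc hdc
  | succ j ih =>
    obtain ⟨L, G, f, g, hL, _, _, h, hgmin⟩ := hK.exists_isSES
    have := hL.subsingleton_ext (i := 0) (hk _ (by lia))
    exact of_presentation he hde hc hdc h
      (ih (by lia) hL (d := f ∘ₗ e) (c := Submodule.mkQ _) h.2.1 (he.comp_exact_iff_exact.2 h.exact)
        hgmin (Submodule.mkQ_surjective _) (LinearMap.exact_map_mkQ_range _))

end IsResidueTranspose

theorem IsTrOmega.isResidueTranspose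
    (hk : ∀ i < t, Subsingleton (Ext (residueMod R) (ModuleCat.of R R) i)) (hj : j < t)
    (hT : IsTrOmega R j (residueMod R) T) : IsResidueTranspose j T := by
  obtain ⟨K, hK, F₁, F₀, d, e, _, _, _, _, he, hde, hmin, _, ⟨q⟩⟩ := hT
  exact .of_isMinSyz hk hj hK he (LinearMap.exact_iff.2 hde.symm) hmin
    (c := q.symm.toLinearMap ∘ₗ Submodule.mkQ _)
    (q.symm.surjective.comp (Submodule.mkQ_surjective _))
    (q.symm.injective.comp_exact_iff_exact.2 (LinearMap.exact_map_mkQ_range _))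

end Presentation

section Filtration

variable {N T Y : ModuleCat.{u} R} {i j n : ℕ} {𝒳 : Set (ModuleCat.{u} R)}

theorem projective_of_subsingleton_ext [IsNoetherianRing R] [Module.Finite R N]
    (hN : HasProjectiveDimensionLT N (n + 1))
    (h : ∀ i < n, Subsingleton (Ext N (ModuleCat.of R R) (i + 1))) : Module.Projective R N := by
  induction n with
  | zero => exact projective_of_hasProjectiveDimensionLT_one hN
  | succ n ih =>
    have := h n n.lt_succ_self
    exact ih hasProjectiveDimensionLT_of_subsingleton_ext fun i hi => h i (by lia)

variable [IsLocalRing R]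

theorem exists_ne_zero_forall_smul_eq_zero [IsNoetherianRing R] [Nontrivial (Ext N Y (i + 1))]
    (hN : N ∈ PD0n R n) :
    ∃ ξ : Ext N Y (i + 1), ξ ≠ 0 ∧ ∀ s ∈ IsLocalRing.maximalIdeal R, s • ξ = 0 := by
  obtain ⟨x, hx⟩ := exists_ne (0 : Ext N Y (i + 1))
  obtain ⟨p, hp, -⟩ := exists_le_isAssociatedPrime_of_isNoetherianRing R x hx
  obtain ⟨hprime, ξ, hpξ⟩ := isAssociatedPrime_iff.1 hp
  have hmem (s : R) : s ∈ p ↔ s • ξ = 0 := by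
    rw [hpξ, Submodule.mem_colon_singleton, Submodule.mem_bot]
  have hclosed : (⟨p, hprime⟩ : PrimeSpectrum R) = IsLocalRing.closedPoint R :=
    (mem_PD0n_iff.1 hN).2.2 fun s hs => (hmem s).2 (mem_extAnnihilator.1 hs i Y ξ)
  refine ⟨ξ, ?_, fun s hs => (hmem s).1 ?_⟩
  · rintro rfl
    exact hprime.ne_top ((Ideal.eq_top_iff_one p).2 ((hmem 1).2 (smul_zero 1)))
  · rwa [show p = IsLocalRing.maximalIdeal R from congrArg PrimeSpectrum.asIdeal hclosed]

namespace IsResidueTranspose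

theorem injective_extPullback (hT : IsResidueTranspose j T)
    {θ : Ext T (ModuleCat.of R R) (j + 1)} (hθ : IsFundamentalClass θ) {φ : N →ₗ[R] T}
    (hφ : extPullback φ θ ≠ 0) (hi : i ≤ j + 1) :
    Function.Injective (extPullback (Y := ModuleCat.of R R) (i := i + 1) φ) := by
  rcases lt_trichotomy i j with hij | rfl | hij
  · have := hT.subsingleton_ext hij
    exact Function.injective_of_subsingleton _
  · refine (injective_iff_map_eq_zero _).2 fun x hx => ?_
    obtain ⟨r, rfl⟩ := hθ.exists_smul_eq x
    have hr : r ∈ IsLocalRing.maximalIdeal R := fun hunit =>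
      hφ (hunit.smul_eq_zero.1 ((map_smul _ r θ).symm.trans hx))
    exact mem_extAnnihilator.1 (hT.maximalIdeal_le_extAnnihilator hr) _ _ _
  · obtain rfl : i = j + 1 := by lia
    have := hT.hasProjectiveDimensionLT.subsingleton T (j + 2) (j + 2) le_rfl (ModuleCat.of R R)
    exact Function.injective_of_subsingleton _

theorem exists_isStableKernel_of_smul_eq_zero (hT : IsResidueTranspose j T)
    (hN : ∀ i < j, Subsingleton (Ext N (ModuleCat.of R R) (i + 1)))
    {ξ : Ext N (ModuleCat.of R R) (j + 1)} (hξ : ξ ≠ 0)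
    (hmξ : ∀ s ∈ IsLocalRing.maximalIdeal R, s • ξ = 0) :
    ∃ (φ : N →ₗ[R] T) (K : ModuleCat.{u} R) (κ : K →ₗ[R] N), IsStableKernel κ φ ∧
      extPullback κ ξ = 0 ∧
      ∀ i ≤ j, Function.Surjective (extPullback (Y := ModuleCat.of R R) (i := i + 1) κ) := by
  have := hT.finite
  obtain ⟨θ, hθ⟩ := hT.exists_isFundamentalClass
  obtain ⟨y, hy⟩ := hθ.exists_comp_eq 0 (j + 1) (zero_add _) N (fun l hl hlj => by
    obtain ⟨l, rfl⟩ := Nat.exists_eq_add_of_le' hl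
    exact hN l (by lia)) ξ hmξ
  obtain ⟨φ, rfl⟩ := homExt.surjective y
  obtain rfl : extPullback φ θ = ξ := hy
  obtain ⟨K, κ, hκ⟩ := exists_isStableKernel φ
  exact ⟨φ, K, κ, hκ, hκ.extPullback_extPullback_eq_zero θ, fun i hi =>
    hκ.surjective_extPullback (hT.injective_extPullback hθ hξ (by lia))⟩

variable [IsNoetherianRing R]

theorem mem_of_isExtClosed (hT : IsResidueTranspose j T) (h𝒳 : IsExtClosed R 𝒳) (hTX : T ∈ 𝒳)
    (hjn : j < n)
    (hsub : ∀ K ∈ PD0n R n,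
      (∀ i ≤ j, Subsingleton (Ext K (ModuleCat.of R R) (i + 1))) → K ∈ 𝒳)
    (hN : N ∈ PD0n R n) (hNj : ∀ i < j, Subsingleton (Ext N (ModuleCat.of R R) (i + 1))) :
    N ∈ 𝒳 := by
  have := hN.1
  have : Module.Finite R (ModuleCat.of R R) := inferInstanceAs (Module.Finite R R)
  suffices ∀ (U : Submodule R (Ext N (ModuleCat.of R R) (j + 1))), ∀ K ∈ PD0n R n,
      (∀ i < j, Subsingleton (Ext K (ModuleCat.of R R) (i + 1))) →
      ∀ q : Ext N (ModuleCat.of R R) (j + 1) →ₗ[R] Ext K (ModuleCat.of R R) (j + 1),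
        Function.Surjective q → LinearMap.ker q = U → K ∈ 𝒳 from
    this _ N hN hNj LinearMap.id Function.surjective_id rfl
  intro U
  induction U using IsNoetherian.induction with
  | hgt U ih =>
  rintro K hK hKj q hq rfl
  rcases subsingleton_or_nontrivial (Ext K (ModuleCat.of R R) (j + 1)) with hE | hE
  · exact hsub K hK fun i hi => hi.lt_or_eq.elim (hKj i) fun h => h ▸ hE
  obtain ⟨ξ, hξ, hmξ⟩ := exists_ne_zero_forall_smul_eq_zero hK (Y := ModuleCat.of R R) (i := j)
  obtain ⟨φ, L, κ, hκ, hκξ, hsurj⟩ := hT.exists_isStableKernel_of_smul_eq_zero hKj hξ hmξ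
  have hker : LinearMap.ker q < LinearMap.ker (extPullback κ ∘ₗ q) := by
    obtain ⟨x, rfl⟩ := hq ξ
    exact (LinearMap.ker_le_ker_comp q _).lt_of_not_ge fun hle => hξ (hle hκξ)
  refine hκ.mem_of_isExtClosed h𝒳 (ih _ hker L ?_ (fun i hi => ?_) _ ((hsurj j le_rfl).comp hq) rfl)
    hTX
  · exact hκ.mem_PD0n hK (PD0n_mono hjn hT.mem_PD0n)
  · have := hKj i hi
    exact (hsurj i hi.le).subsingleton

end IsResidueTranspose

theorem PD0n_subset_of_isExtClosed [IsNoetherianRing R] (h𝒳 : IsExtClosed R 𝒳)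
    (hproj : ∀ M : ModuleCat.{u} R, Module.Finite R M → Module.Projective R M → M ∈ 𝒳)
    (hT : ∀ j < n, ∃ T ∈ 𝒳, IsResidueTranspose j T) : PD0n R n ⊆ 𝒳 := by
  suffices ∀ m ≤ n, ∀ N ∈ PD0n R n,
      (∀ i < m, Subsingleton (Ext N (ModuleCat.of R R) (i + 1))) → N ∈ 𝒳 from
    fun N hN => this 0 n.zero_le N hN fun i hi => absurd hi i.not_lt_zero
  intro m hm
  induction hm using Nat.decreasingInduction with
  | self =>
    intro N hN hE
    obtain ⟨_, hpd, -⟩ := mem_PD0n_iff.1 hN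
    exact hproj N inferInstance (projective_of_subsingleton_ext hpd hE)
  | of_succ j hj ih =>
    intro N hN hE
    obtain ⟨T, hTX, hT⟩ := hT j hj
    exact hT.mem_of_isExtClosed h𝒳 hTX hj (fun K hK hKE => ih K hK fun i hi => hKE i (by lia)) hN hE

end Filtration

section Resolving

variable {F H K M T T' Y : ModuleCat.{u} R} {i j n : ℕ} {𝒳 : Set (ModuleCat.{u} R)}

theorem IsSES.exists_surjective_extPullback {f : T' →ₗ[R] H} {g : H →ₗ[R] T} (h : IsSES f g)
    [Module.Projective R H] {d : K →ₗ[R] F} {p : F →ₗ[R] M} (h' : IsSES d p) [Module.Finite R F]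
    [Module.Free R F] {φ : T' →ₗ[R] K}
    (hφ : Function.Surjective (extPullback (Y := Y) (i := i) φ))
    (hext : ∀ χ : Module.Dual R F, ∃ w : Module.Dual R H, w ∘ₗ f = χ ∘ₗ d ∘ₗ φ) :
    ∃ c : T →ₗ[R] M, Function.Surjective (extPullback (Y := Y) (i := i + 1) c) := by
  obtain ⟨b, hb⟩ := exists_extension_of_functionals f (d ∘ₗ φ) hext
  obtain ⟨c, hc⟩ := h.exists_desc (p ∘ₗ b) (by
    rw [LinearMap.comp_assoc, hb, ← LinearMap.comp_assoc, h'.exact.linearMap_comp_eq_zero,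
      LinearMap.zero_comp])
  refine ⟨c, fun y => ?_⟩
  obtain ⟨w, rfl⟩ := (h.exact_contravariantδ_extPullback y).1 (ext_eq_zero_of_projective _)
  obtain ⟨x, rfl⟩ := hφ w
  exact ⟨h'.contravariantδ x, h.extPullback_contravariantδ h' φ b c hb.symm hc.symm x⟩

theorem smul_top_le_comap_dual {N : Type u} [AddCommGroup N] [Module R N] {I : Ideal R}
    (χ : Module.Dual R N) : I • (⊤ : Submodule R N) ≤ Submodule.comap χ I := by
  simpa only [smul_eq_mul, Ideal.mul_top] using Submodule.smul_top_le_comap_smul_top I χ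

theorem IsResolving.isExtClosed (h𝒳 : IsResolving R 𝒳) : IsExtClosed R 𝒳 :=
  ⟨h𝒳.iso_closed, h𝒳.summand_closed, h𝒳.ext_closed⟩

variable [IsLocalRing R]

theorem IsResolving.PD0n_zero_subset (h𝒳 : IsResolving R 𝒳) : PD0n R 0 ⊆ 𝒳 := fun N hN =>
  h𝒳.proj_mem N hN.1 hN.2.1

variable [IsNoetherianRing R]

theorem exists_eq_one_and_mem_maximalIdeal [Module.Finite R M] (hM : HasProjectiveDimensionLT M 2)
    (hM' : ¬ HasProjectiveDimensionLT M 1) :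
    ∃ (K F : ModuleCat.{u} R) (d : K →ₗ[R] F) (p : F →ₗ[R] M),
      Module.Finite R F ∧ Module.Free R F ∧ IsSES d p ∧
      ∃ (e : K) (ψ : Module.Dual R K), ψ e = 1 ∧
        ∀ χ : Module.Dual R F, χ (d e) ∈ IsLocalRing.maximalIdeal R := by
  obtain ⟨K, F, d, p, _, _, h, hmin⟩ := exists_minimal_free_cover M
  have : Module.Finite R K := .of_injective d h.1
  have : Module.Projective R K := projective_of_hasProjectiveDimensionLT_one
    (h.shortExact.hasProjectiveDimensionLT_X₁ 1 (hasProjectiveDimensionLT_of_projective 0) hM)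
  have : Module.Free R K := Module.free_of_flat_of_isLocalRing
  have : Nontrivial K := not_subsingleton_iff_nontrivial.1 fun _ => hM'
    (h.shortExact.hasProjectiveDimensionLT_X₃ 0
      (ModuleCat.isZero_of_subsingleton K).hasProjectiveDimensionLT_zero
      (hasProjectiveDimensionLT_of_projective 0))
  let b := Module.Free.chooseBasis R K
  obtain ⟨k⟩ := b.index_nonempty
  have hd : d (b k) ∈ IsLocalRing.maximalIdeal R • (⊤ : Submodule R F) :=
    hmin (h.exact.apply_apply_eq_zero (b k))
  refine ⟨K, F, d, p, inferInstance, inferInstance, h, b k, b.coord k, ?_, fun χ => ?_⟩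
  · rw [Module.Basis.coord_apply, b.repr_self, Finsupp.single_eq_same]
  · exact smul_top_le_comap_dual χ hd

namespace IsResidueTranspose

theorem exists_surjective_extPullback (hT : IsResidueTranspose j T) [Module.Finite R M]
    (hM : HasProjectiveDimensionLT M (j + 2)) (hM' : ¬ HasProjectiveDimensionLT M (j + 1)) :
    ∃ φ : T →ₗ[R] M,
      Function.Surjective (extPullback (Y := ModuleCat.of R R) (i := j + 1) φ) := by
  induction j generalizing T M with
  | zero =>
    obtain ⟨H, f, g, _, _, h, hf⟩ := hT
    obtain ⟨K, F, d, p, _, _, h', e, ψ, hψ, he⟩ := exists_eq_one_and_mem_maximalIdeal hM hM'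
    let φ : ModuleCat.of R R →ₗ[R] K := LinearMap.toSpanSingleton R K e
    refine h.exists_surjective_extPullback h' (φ := φ) (fun y => ?_) fun χ => ?_
    · obtain ⟨a, rfl⟩ := homExt.surjective y
      refine ⟨homExt (N := K) (Y := ModuleCat.of R R) (a (1 : R) • ψ), ?_⟩
      rw [extPullback_homExt]
      congr 1
      refine LinearMap.ext_ring ?_
      simp [φ, hψ]
    · obtain ⟨w, hw⟩ := hf.ge (he χ)
      refine ⟨w, LinearMap.ext_ring (hw.trans ?_)⟩
      simp [φ]
  | succ j ih =>
    obtain ⟨T', H, f, g, hT', _, _, h, hf⟩ := hT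
    obtain ⟨K, F, d, p, _, _, h'⟩ := exists_free_cover M
    have : Module.Finite R K := .of_injective d h'.1
    obtain ⟨φ, hφ⟩ := ih hT' (M := K)
      (h'.shortExact.hasProjectiveDimensionLT_X₁ _ (hasProjectiveDimensionLT_of_projective _) hM)
      fun hK => hM' (h'.shortExact.hasProjectiveDimensionLT_X₃ _ hK
        (hasProjectiveDimensionLT_of_projective _))
    exact h.exists_surjective_extPullback h' hφ fun χ => hf (χ ∘ₗ d ∘ₗ φ)

theorem mem_of_isResolving (hT : IsResidueTranspose j T) (h𝒳 : IsResolving R 𝒳)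
    (hsub : PD0n R j ⊆ 𝒳) (hMX : M ∈ 𝒳) (hM : M ∈ PD0n R (j + 1))
    (hM' : ¬ HasProjectiveDimensionLT M (j + 1)) : T ∈ 𝒳 := by
  obtain ⟨_, hpd, -⟩ := mem_PD0n_iff.1 hM
  obtain ⟨φ, hφ⟩ := hT.exists_surjective_extPullback hpd hM'
  obtain ⟨L, κ, hκ⟩ := exists_isStableKernel φ
  have hκsurj : Function.Surjective (extPullback (Y := ModuleCat.of R R) (i := j + 1) κ) := by
    have := hpd.subsingleton M (j + 2) (j + 2) le_rfl (ModuleCat.of R R)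
    exact hκ.surjective_extPullback (Function.injective_of_subsingleton _)
  have : Subsingleton (Ext L (ModuleCat.of R R) (j + 1)) :=
    subsingleton_of_forall_eq 0 fun y => by
      obtain ⟨z, rfl⟩ := hκsurj y
      obtain ⟨x, rfl⟩ := hφ z
      exact hκ.extPullback_extPullback_eq_zero x
  obtain ⟨_, _, hloc⟩ := mem_PD0n_iff.1 (hκ.mem_PD0n hT.mem_PD0n hM)
  exact hκ.mem_of_isExtClosed h𝒳.isExtClosed
    (hsub (mem_PD0n_iff.2 ⟨inferInstance, hasProjectiveDimensionLT_of_subsingleton_ext, hloc⟩)) hMX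

end IsResidueTranspose

namespace IsResolving

theorem PD0n_subset (h𝒳 : IsResolving R 𝒳) (hT : ∀ j < n, ∃ T, IsResidueTranspose (R := R) j T)
    (hMX : M ∈ 𝒳) (hM : M ∈ PD0n R n) (hM' : ¬ HasProjectiveDimensionLT M n) : PD0n R n ⊆ 𝒳 := by
  induction n generalizing M with
  | zero => exact h𝒳.PD0n_zero_subset
  | succ n ih =>
    have := hM.1
    obtain ⟨K, F, d, p, _, _, h⟩ := exists_free_cover M
    have hKM : K ∈ PD0n R n := h.syzygy_mem_PD0n hM
    have hsub : PD0n R n ⊆ 𝒳 := ih (fun j hj => hT j (by lia))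
      (h𝒳.syzygy_closed K F M d p h hKM.1 inferInstance inferInstance hMX) hKM
      fun hK => hM' (h.shortExact.hasProjectiveDimensionLT_X₃ _ hK
        (hasProjectiveDimensionLT_of_projective _))
    refine PD0n_subset_of_isExtClosed h𝒳.isExtClosed h𝒳.proj_mem fun j hj => ?_
    obtain ⟨T, hTj⟩ := hT j hj
    refine ⟨T, ?_, hTj⟩
    rcases Nat.lt_succ_iff_lt_or_eq.1 hj with hjn | rfl
    · exact hsub (PD0n_mono hjn hTj.mem_PD0n)
    · exact hTj.mem_of_isResolving h𝒳 hsub hMX hM hM'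

theorem exists_eq_PD0n (h𝒳 : IsResolving R 𝒳) (hT : ∀ j < n, ∃ T, IsResidueTranspose (R := R) j T)
    (h𝒳n : 𝒳 ⊆ PD0n R n) : ∃ m ≤ n, 𝒳 = PD0n R m := by
  induction n with
  | zero => exact ⟨0, le_rfl, h𝒳n.antisymm h𝒳.PD0n_zero_subset⟩
  | succ n ih =>
    by_cases hpd : ∀ M ∈ 𝒳, HasProjectiveDimensionLT M (n + 1)
    · obtain ⟨m, hm, rfl⟩ := ih (fun j hj => hT j (by lia)) fun M hM =>
        have ⟨hfin, _, hloc⟩ := mem_PD0n_iff.1 (h𝒳n hM)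
        mem_PD0n_iff.2 ⟨hfin, hpd M hM, hloc⟩
      exact ⟨m, by lia, rfl⟩
    · push Not at hpd
      obtain ⟨M, hM, hpd⟩ := hpd
      exact ⟨n + 1, le_rfl, h𝒳n.antisymm (h𝒳.PD0n_subset hT hM (h𝒳n hM) hpd)⟩

end IsResolving

end Resolving

section Depth

variable [IsLocalRing R] {Y : ModuleCat.{u} R} {i n t : ℕ}

theorem smul_residueMod_ext_eq_zero {a : R} (ha : a ∈ IsLocalRing.maximalIdeal R)
    (x : Ext (residueMod R) Y i) : a • x = 0 := by
  have hid : a • (LinearMap.id : residueMod R →ₗ[R] residueMod R) = 0 :=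
    LinearMap.ext fun y => by
      rw [LinearMap.smul_apply, LinearMap.id_apply, ← algebraMap_smul (IsLocalRing.ResidueField R),
        IsLocalRing.ResidueField.algebraMap_eq, (IsLocalRing.residue_eq_zero_iff a).2 ha, zero_smul,
        LinearMap.zero_apply]
  rw [← extPullback_id x, ← LinearMap.smul_apply, ← map_smul, hid, map_zero, LinearMap.zero_apply]

theorem length_le_of_depthE_eq (ht : depthE R (IsLocalRing.maximalIdeal R) R = t) {rs : List R}
    (hrs : ∀ r ∈ rs, r ∈ IsLocalRing.maximalIdeal R)
    (hreg : RingTheory.Sequence.IsWeaklyRegular R rs) : rs.length ≤ t :=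
  ENat.natCast_le_natCast.1 (ht ▸ le_sSup ⟨rs, hrs, hreg, rfl⟩)

theorem exists_isWeaklyRegular_length_eq
    (ht : depthE R (IsLocalRing.maximalIdeal R) R = t) :
    ∃ rs : List R, (∀ r ∈ rs, r ∈ IsLocalRing.maximalIdeal R) ∧
      RingTheory.Sequence.IsWeaklyRegular R rs ∧ rs.length = t := by
  have : Nonempty {x : ℕ∞ | ∃ rs : List R, (∀ r ∈ rs, r ∈ IsLocalRing.maximalIdeal R) ∧
      RingTheory.Sequence.IsWeaklyRegular R rs ∧ x = rs.length} :=
    ⟨0, [], by simp, .nil R R, rfl⟩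
  obtain ⟨rs, hrs, hreg, hlen⟩ :=
    ENat.sSup_mem_of_nonempty_of_lt_top (ht.trans_lt (ENat.natCast_lt_top t))
  exact ⟨rs, hrs, hreg, ENat.natCast_inj.1 (hlen.symm.trans ht)⟩

theorem support_residueMod : Module.support R (residueMod R) =
    PrimeSpectrum.zeroLocus (IsLocalRing.maximalIdeal R) := by
  change Module.support R (R ⧸ IsLocalRing.maximalIdeal R) = _
  rw [Module.support_eq_zeroLocus, Ideal.annihilator_quotient]

theorem maximalIdeal_smul_top_lt_top :
    IsLocalRing.maximalIdeal R • (⊤ : Submodule R (ModuleCat.of R R)) < ⊤ := by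
  change IsLocalRing.maximalIdeal R • (⊤ : Submodule R R) < ⊤
  rw [smul_eq_mul, Ideal.mul_top]
  exact (IsLocalRing.maximalIdeal.isMaximal R).ne_top.lt_top

variable [IsNoetherianRing R]

theorem subsingleton_residueMod_ext (ht : depthE R (IsLocalRing.maximalIdeal R) R = t)
    (hi : i < t) : Subsingleton (Ext (residueMod R) (ModuleCat.of R R) i) := by
  obtain ⟨rs, hrs, hreg, rfl⟩ := exists_isWeaklyRegular_length_eq ht
  exact ModuleCat.subsingleton_ext_of_exists_isRegular _ _ support_residueMod.subset _
    maximalIdeal_smul_top_lt_top rs hrs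
    ((IsLocalRing.isRegular_iff_isWeaklyRegular_of_subset_maximalIdeal hrs).2 hreg) i hi

theorem nontrivial_residueMod_ext (ht : depthE R (IsLocalRing.maximalIdeal R) R = t) :
    Nontrivial (Ext (residueMod R) (ModuleCat.of R R) t) := by
  by_contra htriv
  obtain ⟨rs, hlen, hrs, hreg⟩ := ModuleCat.exists_isRegular_of_exists_subsingleton_ext
    (IsLocalRing.maximalIdeal R) (t + 1) (ModuleCat.of R R) maximalIdeal_smul_top_lt_top
    (residueMod R) support_residueMod fun i hi => by
      rcases Nat.lt_succ_iff_lt_or_eq.1 hi with hi | rfl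
      · exact subsingleton_residueMod_ext ht hi
      · exact not_nontrivial_iff_subsingleton.1 htriv
  have := length_le_of_depthE_eq ht hrs hreg.toIsWeaklyRegular
  lia

/-- The differentials of a minimal free resolution vanish on `Ext(k, -)`, so a nonzero class in
`Ext^t(k, R)` survives dimension shifting down to `s = 0`, where `d` is injective: this is what
bounds projective dimensions by `t`. -/
theorem exists_ne_zero_extPushforward_eq_zero
    (ht : depthE R (IsLocalRing.maximalIdeal R) R = t) {s : ℕ} (hs : s + n = t)
    {M : ModuleCat.{u} R} [Module.Finite R M] (hM : HasProjectiveDimensionLT M (n + 2))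
    (hM' : ¬ HasProjectiveDimensionLT M (n + 1)) :
    ∃ (K F : ModuleCat.{u} R) (d : K →ₗ[R] F) (p : F →ₗ[R] M), IsSES d p ∧
      ∃ x : Ext (residueMod R) K s, x ≠ 0 ∧ extPushforward d x = 0 := by
  induction n generalizing s M with
  | zero =>
    obtain rfl : s = t := hs
    have := nontrivial_residueMod_ext ht
    obtain ⟨ξ, hξ⟩ := exists_ne (0 : Ext (residueMod R) (ModuleCat.of R R) s)
    obtain ⟨K, F, d, p, _, _, h, e, ψ, hψ, he⟩ := exists_eq_one_and_mem_maximalIdeal hM hM'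
    let ε : ModuleCat.of R R →ₗ[R] K := LinearMap.toSpanSingleton R K e
    refine ⟨K, F, d, p, h, extPushforward ε ξ, fun hzero => hξ ?_, ?_⟩
    · have hψε := extPushforward_ring_end ((ψ : K →ₗ[R] ModuleCat.of R R) ∘ₗ ε) ξ
      rw [extPushforward_comp, hzero, map_zero] at hψε
      simpa [ε, hψ] using hψε.symm
    · refine ext_eq_zero_of_functionals _ fun χ => ?_
      rw [← extPushforward_comp, ← extPushforward_comp, extPushforward_ring_end]
      exact smul_residueMod_ext_eq_zero (by simpa [ε] using he χ) ξ
  | succ n ih =>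
    obtain ⟨K, F, d, p, _, _, h⟩ := exists_free_cover M
    have : Module.Finite R K := .of_injective d h.1
    obtain ⟨K', F', d', p', h', x, hx, hdx⟩ := ih (s := s + 1) (by lia) (M := K)
      (h.shortExact.hasProjectiveDimensionLT_X₁ _ (hasProjectiveDimensionLT_of_projective _) hM)
      fun hK => hM' (h.shortExact.hasProjectiveDimensionLT_X₃ _ hK
        (hasProjectiveDimensionLT_of_projective _))
    obtain ⟨z, rfl⟩ := (h'.exact_covariantδ_extPushforward x).1 hdx
    have := subsingleton_residueMod_ext ht (show s < t by lia)
    have := subsingleton_ext_of_free (Y := F) (N := residueMod R) (i := s)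
    exact ⟨K, F, d, p, h, z, fun hz => hx (by rw [hz, map_zero]), Subsingleton.elim _ _⟩

theorem hasProjectiveDimensionLT_depth_add_one
    (ht : depthE R (IsLocalRing.maximalIdeal R) R = t) {M : ModuleCat.{u} R} [Module.Finite R M]
    (hM : HasProjectiveDimensionLT M (t + n + 1)) : HasProjectiveDimensionLT M (t + 1) := by
  induction n generalizing M with
  | zero => exact hM
  | succ n ih =>
    by_contra hM'
    obtain ⟨K₁, F₁, d₁, p₁, _, _, h₁⟩ := exists_free_cover M
    have : Module.Finite R K₁ := .of_injective d₁ h₁.1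
    have hK₁ : HasProjectiveDimensionLT K₁ (t + 1) :=
      ih (h₁.shortExact.hasProjectiveDimensionLT_X₁ _ (hasProjectiveDimensionLT_of_projective _) hM)
    obtain ⟨K, F, d, p, h, x, hx, hdx⟩ := exists_ne_zero_extPushforward_eq_zero ht (zero_add t)
      (h₁.shortExact.hasProjectiveDimensionLT_X₃ _ hK₁ (hasProjectiveDimensionLT_of_projective _))
      hM'
    obtain ⟨φ, rfl⟩ := homExt.surjective x
    rw [extPushforward_homExt, LinearEquiv.map_eq_zero_iff] at hdx
    refine hx (homExt.map_eq_zero_iff.2 (LinearMap.ext fun y => h.1 ?_))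
    exact (LinearMap.congr_fun hdx y).trans (map_zero d).symm

theorem PD0n_depth (ht : depthE R (IsLocalRing.maximalIdeal R) R = t) : PD0n R t = PD0 R := by
  ext M
  rw [mem_PD0_iff]
  refine ⟨fun hM => ⟨t, hM⟩, fun ⟨n, hM⟩ => ?_⟩
  obtain ⟨_, hpd, hloc⟩ := mem_PD0n_iff.1 hM
  have := hasProjectiveDimensionLT_of_ge M (n + 1) (t + n + 1) (by lia)
  exact mem_PD0n_iff.2 ⟨inferInstance, hasProjectiveDimensionLT_depth_add_one ht this, hloc⟩

end Depth

section Closures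

variable {M N T : ModuleCat.{u} R} {𝒳 : Set (ModuleCat.{u} R)} {j m n t : ℕ}

namespace IsExtClosed

theorem mem_of_retract (h𝒳 : IsExtClosed R 𝒳) (hM : M ∈ 𝒳) (a : N →ₗ[R] M) (b : M →ₗ[R] N)
    (hab : b ∘ₗ a = LinearMap.id) : N ∈ 𝒳 := by
  let e : (LinearMap.ker b × N) ≃ₗ[R] M := lequivProdOfRightSplitExact
    (LinearMap.ker b).subtype_injective (LinearMap.ker b).range_subtype hab
  exact h𝒳.2.1 N (ModuleCat.of R (LinearMap.ker b))
    (h𝒳.1 M _ ⟨e.symm.trans (LinearEquiv.prodComm R _ _)⟩ hM)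

theorem pi_mem (h𝒳 : IsExtClosed R 𝒳) (hR : ModuleCat.of R R ∈ 𝒳) (T : Fin m → ModuleCat.{u} R)
    (hT : ∀ i, T i ∈ 𝒳) : ModuleCat.of R ((i : Fin m) → T i) ∈ 𝒳 := by
  induction m with
  | zero => exact h𝒳.mem_of_retract hR 0 0 (LinearMap.ext fun _ => Subsingleton.elim _ _)
  | succ m ih =>
    have hprod : ModuleCat.of R (T 0 × ((i : Fin m) → T i.succ)) ∈ 𝒳 :=
      h𝒳.2.2 _ _ _ _ _ (IsSES.inl_snd (T 0) (ModuleCat.of R ((i : Fin m) → T i.succ))) (hT 0)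
        (ih _ fun i => hT i.succ)
    exact h𝒳.1 _ (ModuleCat.of R ((i : Fin (m + 1)) → T i))
      ⟨Fin.consLinearEquiv R fun i => T i⟩ hprod

theorem mem_of_projective [IsLocalRing R] (h𝒳 : IsExtClosed R 𝒳) (hR : ModuleCat.of R R ∈ 𝒳)
    [Module.Finite R M] [Module.Projective R M] : M ∈ 𝒳 := by
  have : Module.Free R M := Module.free_of_flat_of_isLocalRing
  exact h𝒳.1 (ModuleCat.of R (Fin (Module.finrank R M) → ModuleCat.of R R)) _
    ⟨(Module.finBasis R M).equivFun.symm⟩ (h𝒳.pi_mem hR _ fun _ => hR)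

end IsExtClosed

variable [IsLocalRing R] [IsNoetherianRing R]

theorem PD0n_zero_eq_addR : PD0n R 0 = addR R := by
  ext M
  refine ⟨fun hM => ?_, fun ⟨n, N, ⟨e⟩⟩ => ?_⟩
  · obtain ⟨_, _, -⟩ := hM
    have : Module.Projective R M := ‹pdLE R 0 M›
    have : Module.Free R M := Module.free_of_flat_of_isLocalRing
    exact ⟨Module.finrank R M, ModuleCat.of R PUnit,
      ⟨LinearEquiv.prodUnique.trans (Module.finBasis R M).equivFun⟩⟩
  · refine mem_PD0n_of_retract (M := ModuleCat.of R (Fin n → R)) mem_PD0n_of_projective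
      (e.toLinearMap ∘ₗ LinearMap.inl R M N) (LinearMap.fst R M N ∘ₗ e.symm.toLinearMap) ?_
    ext x
    simp

theorem isExtClosed_PD0n (n : ℕ) : IsExtClosed R (PD0n R n) := (isResolving_PD0n n).isExtClosed

theorem exists_isResidueTranspose
    (hk : ∀ i < t, Subsingleton (Ext (residueMod R) (ModuleCat.of R R) i)) (hj : j < t) :
    ∃ T, IsResidueTranspose (R := R) j T :=
  have ⟨T, hT⟩ := exists_isTrOmega j (residueMod R)
  ⟨T, hT.isResidueTranspose hk hj⟩

namespace IsResidueTranspose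

theorem PD0n_ssubset (hT : IsResidueTranspose (R := R) n T) : PD0n R n ⊂ PD0n R (n + 1) :=
  (Set.ssubset_iff_of_subset (PD0n_mono n.le_succ)).2
    ⟨T, hT.mem_PD0n, fun hT' => hT.not_hasProjectiveDimensionLT (mem_PD0n_iff.1 hT').2.1⟩

theorem PD0n_eq_resClosure (hT : IsResidueTranspose n T)
    (hex : ∀ j < n + 1, ∃ T, IsResidueTranspose (R := R) j T) :
    PD0n R (n + 1) = resClosure R {T} := by
  refine Set.Subset.antisymm (Set.subset_sInter fun 𝒳 ⟨h𝒳, hT𝒳⟩ => ?_) (Set.sInter_subset_of_mem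
    ⟨isResolving_PD0n _, Set.singleton_subset_iff.2 hT.mem_PD0n⟩)
  exact h𝒳.PD0n_subset hex (Set.singleton_subset_iff.1 hT𝒳) hT.mem_PD0n
    hT.not_hasProjectiveDimensionLT

end IsResidueTranspose

theorem PD0n_eq_extClosure {T : Fin n → ModuleCat.{u} R}
    (hT : ∀ i : Fin n, IsResidueTranspose (i : ℕ) (T i)) :
    PD0n R n = extClosure R {ModuleCat.of R (R × ((i : Fin n) → T i))} := by
  refine Set.Subset.antisymm (Set.subset_sInter fun 𝒳 ⟨h𝒳, hT𝒳⟩ => ?_) (Set.sInter_subset_of_mem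
    (t := PD0n R n) ⟨isExtClosed_PD0n n, Set.singleton_subset_iff.2 ?_⟩)
  · have hsum := Set.singleton_subset_iff.1 hT𝒳
    have hR : ModuleCat.of R R ∈ 𝒳 := h𝒳.mem_of_retract hsum (LinearMap.inl R R _)
      (LinearMap.fst R R _) (LinearMap.fst_comp_inl R R _)
    refine PD0n_subset_of_isExtClosed h𝒳 (fun M _ _ => h𝒳.mem_of_projective hR) fun j hj =>
      ⟨T ⟨j, hj⟩, ?_, hT ⟨j, hj⟩⟩
    refine h𝒳.mem_of_retract hsum (LinearMap.inr R R _ ∘ₗ LinearMap.single R (T ·) ⟨j, hj⟩)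
      (LinearMap.proj (φ := (T ·)) ⟨j, hj⟩ ∘ₗ LinearMap.snd R R _) ?_
    ext x
    simp
  · refine (IsSES.inl_snd (ModuleCat.of R R) (ModuleCat.of R _)).middle_mem_PD0n
      mem_PD0n_of_projective ((isExtClosed_PD0n n).pi_mem mem_PD0n_of_projective T fun i => ?_)
    exact PD0n_mono (by lia) (hT i).mem_PD0n

end Closures

end

/-- Theorem 1.1: classification of the resolving subcategories contained in `PD_0(R)`
over a noetherian local ring of depth `t`, together with the descriptions
`PD_0^n(R) = res(Tr Ω^{n-1} k) = ext(R ⊕ ⊕_{i=0}^{n-1} Tr Ω^i k)` for `1 ≤ n ≤ t`. -/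
theorem classification_of_resolving_subcats_in_PD0
    [IsNoetherianRing R] [IsLocalRing R]
    (t : ℕ) (hdepth : depthE R (IsLocalRing.maximalIdeal R) R = (t : ℕ∞)) :
    (PD0n R 0 = addR R) ∧
    (∀ n : ℕ, n < t → PD0n R n ⊂ PD0n R (n+1)) ∧
    (PD0n R t = PD0 R) ∧
    (∀ n : ℕ, n ≤ t → IsResolving R (PD0n R n)) ∧
    (∀ 𝒳 : Set (ModuleCat.{u} R), IsResolving R 𝒳 → 𝒳 ⊆ PD0 R →
      ∃ n : ℕ, n ≤ t ∧ 𝒳 = PD0n R n) ∧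
    (∀ n : ℕ, 1 ≤ n → n ≤ t →
      (∀ T : ModuleCat.{u} R, IsTrOmega R (n-1) (residueMod R) T →
        PD0n R n = resClosure R {T}) ∧
      (∀ T : Fin n → ModuleCat.{u} R,
        (∀ i : Fin n, IsTrOmega R (i : ℕ) (residueMod R) (T i)) →
        PD0n R n = extClosure R {ModuleCat.of R (R × ((i : Fin n) → ↥(T i)))})) := by
  have hk : ∀ i < t, Subsingleton (Abelian.Ext (residueMod R) (ModuleCat.of R R) i) := fun _ =>
    subsingleton_residueMod_ext hdepth
  have hex : ∀ j < t, ∃ T, IsResidueTranspose (R := R) j T := fun _ =>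
    exists_isResidueTranspose hk
  refine ⟨PD0n_zero_eq_addR, fun n hn => ?_, PD0n_depth hdepth, fun n _ => isResolving_PD0n n,
    fun 𝒳 h𝒳 hsub => h𝒳.exists_eq_PD0n hex (hsub.trans_eq (PD0n_depth hdepth).symm),
    fun n hn hnt => ⟨fun T hT => ?_, fun T hT => ?_⟩⟩
  · obtain ⟨T, hT⟩ := hex n hn
    exact hT.PD0n_ssubset
  · obtain ⟨n, rfl⟩ := Nat.exists_eq_add_of_le' hn
    exact (hT.isResidueTranspose hk hnt).PD0n_eq_resClosure fun j hj => hex j (by lia)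
  · exact PD0n_eq_extClosure fun i => (hT i).isResidueTranspose hk (by lia)

end ResolvPaper
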